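/- arXiv:1005.3494 — 6 statements merged into one kernel-verified Lean document; each statement's English description precedes it below -/
import Mathlib

section
/- Let $C_k$ for integers $k \ge 0$ be defined by $C_k = \frac{1}{k!}\frac{1}{2\pi i}\int_{c-i\infty}^{c+i\infty} \frac{e^s}{s}(\log s + \gamma)^k\,ds$ for any $c>0$, where the conditionally convergent integral is interpreted as $\lim_{T\to\infty}\int_{c-iT}^{c+iT}$ and $\gamma$ is the Euler–Mascheroni constant. Then for every complex number $z$ the series $\sum_{k=0}^{\infty} C_k z^k$ converges absolutely and $\sum_{k=0}^{\infty} C_k z^k = \frac{e^{\gamma z}}{\Gamma(1-z)}$. -/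
open MeasureTheory Filter Topology

/-!
The Mellin transform of `(log⁺ (1 / x)) ^ (w - 1)` is `Γ(w) s ^ (-w)`; inverting it at `x = 1 / e`
gives Laplace's formula `∫ e ^ s s ^ (-w) ds = 2πi / Γ(w)` over `Re s = c`, absolutely convergent
for `Re w > 1`. One integration by parts extends it to `Re w > 0` as a symmetric limit, the
truncation at height `T` having an error of order `T ^ (-Re w)`. For `w = 1 - z` this makes the
truncations of `∫ e ^ s / s * e ^ ((log s + γ) z) ds` converge to `2πi e ^ (γ z) / Γ(1 - z)`
uniformly for `z` near `0`. By Cauchy's estimates their `k`-th derivatives at `0`, which are the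
truncations of `∫ e ^ s / s * (log s + γ) ^ k ds`, converge too, so the integrals `C k` are the
Taylor coefficients at `0` of the entire function `e ^ (γ z) / Γ(1 - z)`.
-/

section

open Complex Set Asymptotics

open scoped Real Nat

/-! ### Derivatives of parametric integrals and of uniform limits -/

theorem hasDerivAt_intervalIntegral_of_continuous {𝕜 E : Type*} [RCLike 𝕜] [NormedAddCommGroup E]
    [NormedSpace ℝ E] [NormedSpace 𝕜 E] {F F' : 𝕜 → ℝ → E}
    (hF : ∀ z, Continuous (F z)) (hF' : Continuous (Function.uncurry F'))
    (hderiv : ∀ z t, HasDerivAt (F · t) (F' z t) z) (a b : ℝ) (z : 𝕜) :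
    HasDerivAt (fun z ↦ ∫ t in a..b, F z t) (∫ t in a..b, F' z t) z := by
  obtain ⟨M, hM⟩ := ((isCompact_closedBall z 1).prod (isCompact_uIcc (a := a) (b := b))
    ).exists_bound_of_continuousOn hF'.continuousOn
  have hF'z : Continuous (F' z) := hF'.comp (Continuous.prodMk_right z)
  refine (intervalIntegral.hasDerivAt_integral_of_dominated_loc_of_deriv_le (bound := fun _ ↦ M)
    (Metric.closedBall_mem_nhds z one_pos) (.of_forall fun y ↦ (hF y).aestronglyMeasurable)
    ((hF z).intervalIntegrable a b) hF'z.aestronglyMeasurable (.of_forall fun t ht y hy ↦ ?_)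
    intervalIntegrable_const (.of_forall fun t _ y _ ↦ hderiv y t)).2
  exact hM (y, t) ⟨hy, uIoc_subset_uIcc ht⟩

theorem hasDerivAt_intervalIntegral_mul_cexp {h L : ℝ → ℂ} (hh : Continuous h) (hL : Continuous L)
    (a b : ℝ) (z : ℂ) :
    HasDerivAt (fun z ↦ ∫ t in a..b, h t * cexp (L t * z))
      (∫ t in a..b, h t * L t * cexp (L t * z)) z := by
  refine hasDerivAt_intervalIntegral_of_continuous (F := fun z t ↦ h t * cexp (L t * z))
    (F' := fun z t ↦ h t * L t * cexp (L t * z)) (by fun_prop) (by fun_prop) (fun z t ↦ ?_) a b z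
  simpa [mul_assoc, mul_comm, mul_left_comm] using
    (((hasDerivAt_id z).const_mul (L t)).cexp).const_mul (h t)

theorem iteratedDeriv_intervalIntegral_mul_cexp {h L : ℝ → ℂ} (hh : Continuous h)
    (hL : Continuous L) (a b : ℝ) (k : ℕ) :
    iteratedDeriv k (fun z ↦ ∫ t in a..b, h t * cexp (L t * z)) =
      fun z ↦ ∫ t in a..b, h t * L t ^ k * cexp (L t * z) := by
  induction k with
  | zero => simp
  | succ k ih =>
    rw [iteratedDeriv_succ, ih]
    ext z
    simpa only [pow_succ, mul_assoc, Pi.mul_apply, Pi.pow_apply] using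
      (hasDerivAt_intervalIntegral_mul_cexp (hh.mul (hL.pow k)) hL a b z).deriv

theorem tendsto_iteratedDeriv_of_tendstoUniformlyOn_sphere {ι E : Type*} [NormedAddCommGroup E]
    [NormedSpace ℂ E] [CompleteSpace E] {l : Filter ι} {F : ι → ℂ → E} {f : ℂ → E} {z₀ : ℂ} {R : ℝ}
    (hR : 0 < R) (hF : ∀ i, DiffContOnCl ℂ (F i) (Metric.ball z₀ R))
    (hf : DiffContOnCl ℂ f (Metric.ball z₀ R))
    (hlim : TendstoUniformlyOn F f l (Metric.sphere z₀ R)) (n : ℕ) :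
    Tendsto (fun i ↦ iteratedDeriv n (F i) z₀) l (𝓝 (iteratedDeriv n f z₀)) := by
  have contDiffAt {g : ℂ → E} (hg : DiffContOnCl ℂ g (Metric.ball z₀ R)) : ContDiffAt ℂ n g z₀ :=
    (hg.differentiableOn.analyticAt (Metric.ball_mem_nhds z₀ hR)).contDiffAt
  rw [Metric.tendsto_nhds]
  intro ε hε
  set K : ℝ := n ! / R ^ n with hK
  have hKpos : 0 < K := by positivity
  filter_upwards [Metric.tendstoUniformlyOn_iff.1 hlim (ε / (2 * K))
    (div_pos hε (mul_pos two_pos hKpos))] with i hi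
  have hbound : ∀ z ∈ Metric.sphere z₀ R, ‖(F i - f) z‖ ≤ ε / (2 * K) := fun z hz ↦ by
    simpa [dist_eq_norm, norm_sub_rev] using (hi z hz).le
  calc dist (iteratedDeriv n (F i) z₀) (iteratedDeriv n f z₀)
      = ‖iteratedDeriv n (F i - f) z₀‖ := by
        rw [dist_eq_norm, iteratedDeriv_sub (contDiffAt (hF i)) (contDiffAt hf)]
    _ ≤ n ! * (ε / (2 * K)) / R ^ n :=
        norm_iteratedDeriv_le_of_forall_mem_sphere_norm_le n hR ((hF i).sub hf) hbound
    _ = ε / 2 := by rw [hK]; field_simp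
    _ < ε := half_lt_self hε

/-! ### Powers on vertical lines -/

variable {c : ℝ}

theorem ofReal_add_mul_I_mem_slitPlane (hc : 0 < c) (t : ℝ) :
    (c + t * I : ℂ) ∈ slitPlane :=
  .inl (by simpa using hc)

theorem continuous_cpow_ofReal_add_mul_I (hc : 0 < c) (w : ℂ) :
    Continuous fun t : ℝ ↦ (c + t * I : ℂ) ^ w :=
  .cpow (by fun_prop) continuous_const (ofReal_add_mul_I_mem_slitPlane hc)

theorem norm_cpow_le_exp_mul_rpow (s w : ℂ) :
    ‖s ^ w‖ ≤ Real.exp (π * |w.im|) * ‖s‖ ^ w.re := by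
  have harg : -(arg s * w.im) ≤ π * |w.im| := by
    refine (neg_le_abs _).trans ?_
    rw [abs_mul]
    gcongr
    exact abs_arg_le_pi s
  calc ‖s ^ w‖
      ≤ ‖s‖ ^ w.re / Real.exp (arg s * w.im) := norm_cpow_le s w
    _ = Real.exp (-(arg s * w.im)) * ‖s‖ ^ w.re := by rw [Real.exp_neg, div_eq_inv_mul]
    _ ≤ Real.exp (π * |w.im|) * ‖s‖ ^ w.re := by gcongr

theorem norm_rpow_ofReal_add_mul_I_le (c : ℝ) {t a : ℝ} (ht : t ≠ 0) (ha : a ≤ 0) :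
    ‖(c + t * I : ℂ)‖ ^ a ≤ |t| ^ a :=
  Real.rpow_le_rpow_of_nonpos (abs_pos.2 ht) (by simpa using abs_im_le_norm (c + t * I)) ha

theorem verticalIntegrable_cpow (hc : 0 < c) {w : ℂ} (hw : w.re < -1) :
    VerticalIntegrable (fun s ↦ s ^ w) c := by
  have hne (t : ℝ) : (c + t * I : ℂ) ≠ 0 :=
    slitPlane_ne_zero (ofReal_add_mul_I_mem_slitPlane hc t)
  have hcont : Continuous fun t : ℝ ↦ ‖(c + t * I : ℂ)‖ ^ w.re :=
    .rpow_const (by fun_prop) fun t ↦ .inl (norm_ne_zero_iff.2 (hne t))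
  have heven (t : ℝ) : ‖(c + (-t : ℝ) * I : ℂ)‖ = ‖(c + t * I : ℂ)‖ := by
    rw [← norm_conj]
    simp
  have htop : (fun t : ℝ ↦ ‖(c + t * I : ℂ)‖ ^ w.re) =O[atTop] fun t ↦ t ^ w.re := by
    refine .of_bound' ?_
    filter_upwards [eventually_gt_atTop 0] with t ht
    rw [Real.norm_of_nonneg (by positivity), Real.norm_of_nonneg (by positivity)]
    simpa [abs_of_pos ht] using norm_rpow_ofReal_add_mul_I_le c ht.ne' (a := w.re) (by linarith)
  have hint : Integrable fun t : ℝ ↦ ‖(c + t * I : ℂ)‖ ^ w.re :=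
    hcont.locallyIntegrable.integrable_of_isBigO_atTop_of_norm_isNegInvariant
      (.of_forall fun t ↦ by simp only [Function.comp_apply, heven]) htop
      ⟨Ioi 1, Ioi_mem_atTop 1, integrableOn_Ioi_rpow_of_lt hw one_pos⟩
  exact (hint.const_mul _).mono' (continuous_cpow_ofReal_add_mul_I hc w).aestronglyMeasurable
    (.of_forall fun t ↦ norm_cpow_le_exp_mul_rpow _ w)

/-! ### Laplace's integral for the reciprocal Gamma function -/

theorem eqOn_re_pos_of_eqOn_ofReal {E : Type*} [NormedAddCommGroup E] [NormedSpace ℂ E]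
    [CompleteSpace E] {f g : ℂ → E} (hf : DifferentiableOn ℂ f {s | 0 < s.re})
    (hg : DifferentiableOn ℂ g {s | 0 < s.re}) (hfg : ∀ r : ℝ, 0 < r → f r = g r) :
    EqOn f g {s | 0 < s.re} := by
  have hopen : IsOpen {s : ℂ | 0 < s.re} := isOpen_lt continuous_const continuous_re
  have hofReal : Tendsto ((↑) : ℝ → ℂ) (𝓝[≠] 1) (𝓝[≠] 1) := by
    simpa using continuous_ofReal.continuousAt.continuousWithinAt.tendsto_nhdsWithin
      (s := {(1 : ℝ)}ᶜ) (t := {(1 : ℂ)}ᶜ) (x := 1) fun r hr ↦ by simpa using hr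
  refine (hf.analyticOnNhd hopen).eqOn_of_preconnected_of_frequently_eq (hg.analyticOnNhd hopen)
    (convex_halfSpace_re_gt 0).isPreconnected (z₀ := 1) (by simp) (hofReal.frequently ?_)
  exact (((lt_mem_nhds one_pos).filter_mono nhdsWithin_le_nhds).mono hfg).frequently

/-- The function `(log⁺ (1 / x)) ^ (w - 1)`. With `x = e ^ (-u)` it is the Laplace kernel
`u ^ (w - 1)` on `u > 0`, extended by zero, so its Mellin transform at `s` is `Γ(w) s ^ (-w)`. -/
noncomputable def logInvPow (w : ℂ) (x : ℝ) : ℂ := (Real.posLog x⁻¹ : ℂ) ^ (w - 1)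

theorem continuousOn_logInvPow {w : ℂ} (hw : 1 < w.re) : ContinuousOn (logInvPow w) (Ioi 0) := by
  have hlog : ContinuousOn (fun x : ℝ ↦ Real.posLog x⁻¹) (Ioi 0) :=
    Real.continuous_posLog.comp_continuousOn (continuousOn_inv₀.mono fun x hx ↦ ne_of_gt hx)
  exact (continuous_ofReal_cpow_const (y := w - 1) (by simpa using hw)).comp_continuousOn hlog

theorem logInvPow_eventuallyEq_zero_atTop {w : ℂ} (hw : w ≠ 1) :
    logInvPow w =ᶠ[atTop] 0 := by
  filter_upwards [eventually_ge_atTop 1] with x hx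
  have hlog : Real.posLog x⁻¹ = 0 := by
    rw [Real.posLog_eq_zero_iff, abs_inv, abs_of_pos (by linarith)]
    exact inv_le_one_of_one_le₀ hx
  simp [logInvPow, hlog, sub_ne_zero.2 hw]

theorem logInvPow_isBigO_nhdsGT_zero (w : ℂ) {b : ℝ} (hb : 0 < b) :
    logInvPow w =O[𝓝[>] 0] fun x : ℝ ↦ x ^ (-b) := by
  refine (((isLittleO_log_rpow_rpow_atTop (w - 1).re hb).comp_tendsto
    tendsto_inv_nhdsGT_zero).isBigO.norm_left.congr' ?_ ?_).of_norm_left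
  all_goals filter_upwards [Ioo_mem_nhdsGT one_pos] with x ⟨hx0, hx1⟩
  · have hlog : 0 < Real.log x⁻¹ := Real.log_pos (one_lt_inv₀ hx0 |>.2 hx1)
    simp only [logInvPow, Real.posLog_apply, max_eq_right hlog.le, Function.comp_apply,
      norm_cpow_eq_rpow_re_of_pos hlog]
    exact Real.norm_of_nonneg (by positivity)
  · simp [Real.inv_rpow hx0.le, Real.rpow_neg hx0.le]

theorem mellinConvergent_logInvPow {w s : ℂ} (hw : 1 < w.re) (hs : 0 < s.re) :
    MellinConvergent (logInvPow w) s :=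
  mellinConvergent_of_isBigO_rpow
    ((continuousOn_logInvPow hw).locallyIntegrableOn measurableSet_Ioi)
    ((logInvPow_eventuallyEq_zero_atTop (ne_of_apply_ne re hw.ne')).trans_isBigO (isBigO_zero _ _))
    (lt_add_one s.re) (logInvPow_isBigO_nhdsGT_zero w (half_pos hs)) (half_lt_self hs)

theorem differentiableOn_mellin_logInvPow {w : ℂ} (hw : 1 < w.re) :
    DifferentiableOn ℂ (mellin (logInvPow w)) {s | 0 < s.re} := fun s hs ↦
  (mellin_differentiableAt_of_isBigO_rpow
    ((continuousOn_logInvPow hw).locallyIntegrableOn measurableSet_Ioi)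
    ((logInvPow_eventuallyEq_zero_atTop (ne_of_apply_ne re hw.ne')).trans_isBigO (isBigO_zero _ _))
    (lt_add_one s.re) (logInvPow_isBigO_nhdsGT_zero w (half_pos hs))
    (half_lt_self hs)).differentiableWithinAt

theorem mellin_logInvPow_ofReal {w : ℂ} (hw : 1 < w.re) {r : ℝ} (hr : 0 < r) :
    mellin (logInvPow w) r = (r : ℂ) ^ (-w) * Gamma w := by
  have hw1 : w - 1 ≠ 0 := sub_ne_zero.2 (ne_of_apply_ne re hw.ne')
  have hlog (u : ℝ) : logInvPow w (Real.exp (-u)) = (max 0 u : ℝ) ^ (w - 1) := by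
    simp [logInvPow, Real.posLog_apply, ← Real.exp_neg]
  have hsupp : Function.support (fun u : ℝ ↦ Real.exp (-r * u) • ((max 0 u : ℝ) : ℂ) ^ (w - 1)) ⊆
      Ioi 0 := fun u hu ↦ by
    contrapose! hu
    simp [max_eq_left (notMem_Ioi.1 hu), hw1]
  calc mellin (logInvPow w) r
      = ∫ u : ℝ, Real.exp (-r * u) • ((max 0 u : ℝ) : ℂ) ^ (w - 1) := by
        simp [mellin_eq_fourier, Real.fourier_eq', hlog]
    _ = ∫ u in Ioi (0 : ℝ), (u : ℂ) ^ (w - 1) * cexp (-(r * u)) := by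
        rw [← setIntegral_eq_integral_of_forall_compl_eq_zero fun u hu ↦ by
          simpa using mt (@hsupp u) hu]
        refine setIntegral_congr_fun measurableSet_Ioi fun u hu ↦ ?_
        simp [max_eq_right (mem_Ioi.1 hu).le, mul_comm]
    _ = (r : ℂ) ^ (-w) * Gamma w := by
        rw [integral_cpow_mul_exp_neg_mul_Ioi (by linarith) hr, one_div,
          inv_cpow _ _ (by simp [arg_ofReal_of_nonneg hr.le, Real.pi_ne_zero.symm]), cpow_neg]

theorem mellin_logInvPow {w s : ℂ} (hw : 1 < w.re) (hs : 0 < s.re) :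
    mellin (logInvPow w) s = s ^ (-w) * Gamma w := by
  have hcpow : DifferentiableOn ℂ (fun s : ℂ ↦ s ^ (-w) * Gamma w) {s | 0 < s.re} := fun s hs ↦
    ((differentiableAt_id.cpow_const (.inl hs)).mul_const _).differentiableWithinAt
  exact eqOn_re_pos_of_eqOn_ofReal (differentiableOn_mellin_logInvPow hw) hcpow
    (fun r hr ↦ mellin_logInvPow_ofReal hw hr) hs

theorem integral_exp_mul_cpow_neg (hc : 0 < c) {w : ℂ} (hw : 1 < w.re) :
    ∫ t : ℝ, cexp (c + t * I) * (c + t * I : ℂ) ^ (-w) = 2 * π / Gamma w := by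
  have hre (t : ℝ) : 0 < (c + t * I : ℂ).re := by simpa using hc
  have hG : Gamma w ≠ 0 := Gamma_ne_zero_of_re_pos (by linarith)
  have hvert : VerticalIntegrable (mellin (logInvPow w)) c := by
    refine ((verticalIntegrable_cpow hc (w := -w) (by simpa using hw)).mul_const (Gamma w)).congr
      (.of_forall fun t ↦ ?_)
    exact (mellin_logInvPow hw (hre t)).symm
  have hcont : ContinuousAt (logInvPow w) (Real.exp (-1)) :=
    (continuousOn_logInvPow hw).continuousAt (Ioi_mem_nhds (Real.exp_pos _))
  have hinv := mellinInv_mellin_eq c (logInvPow w) (Real.exp_pos (-1))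
    (mellinConvergent_logInvPow hw (by simpa using hc)) hvert hcont
  have hexp (s : ℂ) : (Real.exp (-1) : ℂ) ^ (-s) = cexp s := by
    rw [cpow_def_of_ne_zero (by simp), ← ofReal_log (Real.exp_pos _).le]
    simp
  have hone : logInvPow w (Real.exp (-1)) = 1 := by
    simp [logInvPow, Real.posLog_apply, ← Real.exp_neg]
  simp only [mellinInv, hexp, hone, mellin_logInvPow hw (hre _), smul_eq_mul, ← mul_assoc,
    integral_mul_const] at hinv
  rw [one_div, inv_smul_eq_iff₀ (by positivity), real_smul, mul_one] at hinv
  rw [eq_div_iff hG, hinv]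
  simp

/-! ### Truncated contour integrals -/

theorem norm_tail_integral_le {E : Type*} [NormedAddCommGroup E] [NormedSpace ℝ E] {f : ℝ → E}
    {g : ℝ → ℝ} {T : ℝ} (hf : Integrable f) (hg : IntegrableOn g (Ioi T))
    (hT : 0 ≤ T) (hfg : ∀ t, T < |t| → ‖f t‖ ≤ g |t|) :
    ‖(∫ t, f t) - ∫ t in (-T)..T, f t‖ ≤ 2 * ∫ t in Ioi T, g t := by
  have hsplit : (∫ t, f t) - ∫ t in (-T)..T, f t
      = (∫ t in Ioi T, f (-t)) + ∫ t in Ioi T, f t := by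
    rw [integral_comp_neg_Ioi, ← intervalIntegral.integral_Iic_sub_Iic hf.integrableOn
      hf.integrableOn, ← intervalIntegral.integral_Iic_add_Ioi hf.integrableOn hf.integrableOn]
    abel
  have hle (u : ℝ → E) (hu : ∀ t ∈ Ioi T, ‖u t‖ ≤ g t) :
      ‖∫ t in Ioi T, u t‖ ≤ ∫ t in Ioi T, g t :=
    norm_integral_le_of_norm_le hg ((ae_restrict_mem measurableSet_Ioi).mono hu)
  have habs {t : ℝ} (ht : t ∈ Ioi T) : |t| = t := abs_of_nonneg (hT.trans ht.le)
  rw [hsplit, two_mul]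
  refine (norm_add_le _ _).trans (add_le_add (hle _ fun t ht ↦ ?_) (hle _ fun t ht ↦ ?_))
  · simpa [habs ht] using hfg (-t) (by rwa [abs_neg, habs ht])
  · simpa [habs ht] using hfg t (by rwa [habs ht])

/-- The contour integral of `f` along the segment from `c - iT` to `c + iT`; symmetric improper
integrals over the line `Re s = c` are its limits as `T → ∞`. -/
noncomputable def verticalIntegral (f : ℂ → ℂ) (c T : ℝ) : ℂ :=
  ∫ t in (-T)..T, f (c + t * I) * I

theorem verticalIntegral_eq_sub_of_hasDerivAt {f F : ℂ → ℂ}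
    (hf : Continuous fun t : ℝ ↦ f (c + t * I))
    (hF : ∀ t : ℝ, HasDerivAt F (f (c + t * I)) (c + t * I)) (T : ℝ) :
    verticalIntegral f c T = F (c + T * I) - F (c - T * I) := by
  have hline (t : ℝ) : HasDerivAt (fun t : ℝ ↦ (c + t * I : ℂ)) I t := by
    simpa using (ofRealCLM.hasDerivAt.mul_const I).const_add (c : ℂ)
  have hcomp (t : ℝ) : HasDerivAt (fun t : ℝ ↦ F (c + t * I)) (f (c + t * I) * I) t :=
    (hF t).comp t (hline t)
  rw [verticalIntegral, intervalIntegral.integral_eq_sub_of_hasDerivAt (fun t _ ↦ hcomp t)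
    ((hf.mul continuous_const).intervalIntegrable _ _)]
  simp [sub_eq_add_neg]

theorem verticalIntegral_exp_mul_cpow_neg (hc : 0 < c) (w : ℂ) (T : ℝ) :
    verticalIntegral (fun s ↦ cexp s * s ^ (-w)) c T =
      cexp (c + T * I) * (c + T * I : ℂ) ^ (-w) - cexp (c - T * I) * (c - T * I : ℂ) ^ (-w) +
        w * verticalIntegral (fun s ↦ cexp s * s ^ (-(w + 1))) c T := by
  have hcont (u : ℂ) : Continuous fun t : ℝ ↦ cexp (c + t * I) * (c + t * I : ℂ) ^ u :=
    .mul (by fun_prop) (continuous_cpow_ofReal_add_mul_I hc u)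
  have hderiv (t : ℝ) : HasDerivAt (fun s : ℂ ↦ cexp s * s ^ (-w))
      (cexp (c + t * I) * (c + t * I : ℂ) ^ (-w) -
        w * (cexp (c + t * I) * (c + t * I : ℂ) ^ (-(w + 1)))) (c + t * I) := by
    refine ((hasDerivAt_exp _).mul (hasStrictDerivAt_cpow_const
      (ofReal_add_mul_I_mem_slitPlane hc t)).hasDerivAt).congr_deriv ?_
    rw [neg_add']
    ring
  have hFTC := verticalIntegral_eq_sub_of_hasDerivAt
    (f := fun s ↦ cexp s * s ^ (-w) - w * (cexp s * s ^ (-(w + 1))))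
    ((hcont _).sub ((hcont _).const_mul w)) hderiv T
  rw [← hFTC]
  simp only [verticalIntegral]
  rw [← intervalIntegral.integral_const_mul, ← intervalIntegral.integral_add]
  · congr 1 with t
    ring
  · exact (((hcont _).sub ((hcont _).const_mul w)).mul_const I).intervalIntegrable _ _
  · exact (((hcont _).mul_const I).const_mul w).intervalIntegrable _ _

theorem norm_exp_mul_cpow_ofReal_add_mul_I_le (c : ℝ) {t : ℝ} (ht : t ≠ 0) {w : ℂ}
    (hw : w.re ≤ 0) :
    ‖cexp (c + t * I) * (c + t * I : ℂ) ^ w‖ ≤ Real.exp (c + π * |w.im|) * |t| ^ w.re := by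
  calc ‖cexp (c + t * I) * (c + t * I : ℂ) ^ w‖
      = Real.exp c * ‖(c + t * I : ℂ) ^ w‖ := by simp [norm_exp]
    _ ≤ Real.exp c * (Real.exp (π * |w.im|) * |t| ^ w.re) := by
        gcongr
        exact (norm_cpow_le_exp_mul_rpow _ w).trans
          (mul_le_mul_of_nonneg_left (norm_rpow_ofReal_add_mul_I_le c ht hw) (Real.exp_nonneg _))
    _ = Real.exp (c + π * |w.im|) * |t| ^ w.re := by rw [Real.exp_add, mul_assoc]

theorem integrable_exp_mul_cpow_ofReal_add_mul_I (hc : 0 < c) {w : ℂ} (hw : w.re < -1) :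
    Integrable fun t : ℝ ↦ cexp (c + t * I) * (c + t * I : ℂ) ^ w :=
  (verticalIntegrable_cpow hc hw).bdd_mul (c := Real.exp c)
    (Continuous.aestronglyMeasurable (by fun_prop)) (.of_forall fun t ↦ by simp [norm_exp])

theorem norm_tail_integral_exp_mul_cpow_neg_le (hc : 0 < c) {w : ℂ} (hw : 0 < w.re)
    {T : ℝ} (hT : 0 < T) :
    ‖(∫ t : ℝ, cexp (c + t * I) * (c + t * I : ℂ) ^ (-(w + 1))) -
        ∫ t in (-T)..T, cexp (c + t * I) * (c + t * I : ℂ) ^ (-(w + 1))‖ ≤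
      2 * (Real.exp (c + π * |w.im|) * (T ^ (-w.re) / w.re)) := by
  have hre : (-(w + 1)).re = -w.re - 1 := by
    simp only [neg_re, add_re, one_re]
    ring
  have him : |(-(w + 1)).im| = |w.im| := by simp
  have hlt : -w.re - 1 < -1 := by linarith
  refine (norm_tail_integral_le (g := fun t ↦ Real.exp (c + π * |w.im|) * t ^ (-w.re - 1))
    (integrable_exp_mul_cpow_ofReal_add_mul_I hc (hre ▸ hlt))
    ((integrableOn_Ioi_rpow_of_lt hlt hT).const_mul _) hT.le fun t ht ↦ ?_).trans_eq ?_
  · simpa only [hre, him] using norm_exp_mul_cpow_ofReal_add_mul_I_le c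
      (abs_pos.1 (hT.trans ht)) (w := -(w + 1)) (by linarith)
  · rw [integral_const_mul, integral_Ioi_rpow_of_lt hlt hT, sub_add_cancel, neg_div_neg_eq]

theorem norm_verticalIntegral_exp_mul_cpow_neg_sub_le (hc : 0 < c) {w : ℂ}
    (hw : 0 < w.re) {T : ℝ} (hT : 0 < T) :
    ‖verticalIntegral (fun s ↦ cexp s * s ^ (-w)) c T - 2 * π * I / Gamma w‖ ≤
      2 * Real.exp (c + π * |w.im|) * (1 + ‖w‖ / w.re) * T ^ (-w.re) := by
  set J : ℂ := ∫ t : ℝ, cexp (c + t * I) * (c + t * I : ℂ) ^ (-(w + 1)) with hJ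
  set J_T : ℂ := ∫ t in (-T)..T, cexp (c + t * I) * (c + t * I : ℂ) ^ (-(w + 1))
  set M : ℝ := Real.exp (c + π * |w.im|)
  have hlimit : 2 * π * I / Gamma w = w * (J * I) := by
    have hrec := one_div_Gamma_eq_self_mul_one_div_Gamma_add_one w
    rw [hJ, integral_exp_mul_cpow_neg hc (by simpa using hw)]
    linear_combination 2 * π * I * hrec
  have hbdry {t : ℝ} (ht : |t| = T) :
      ‖cexp (c + t * I) * (c + t * I : ℂ) ^ (-w)‖ ≤ M * T ^ (-w.re) := by
    have ht0 : t ≠ 0 := abs_pos.1 (ht ▸ hT)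
    simpa only [ht, neg_re, neg_im, abs_neg] using
      norm_exp_mul_cpow_ofReal_add_mul_I_le c ht0 (w := -w) (by simpa using hw.le)
  have hplus := hbdry (abs_of_pos hT)
  have hminus : ‖cexp (c - T * I) * (c - T * I : ℂ) ^ (-w)‖ ≤ M * T ^ (-w.re) := by
    simpa [sub_eq_add_neg] using hbdry (t := -T) (by rw [abs_neg, abs_of_pos hT])
  have htail : ‖w * ((J_T - J) * I)‖ ≤ ‖w‖ * (2 * (M * (T ^ (-w.re) / w.re))) := by
    rw [norm_mul, norm_mul, norm_I, mul_one, norm_sub_rev]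
    gcongr
    exact norm_tail_integral_exp_mul_cpow_neg_le hc hw hT
  rw [verticalIntegral_exp_mul_cpow_neg hc, hlimit, verticalIntegral,
    intervalIntegral.integral_mul_const, add_sub_assoc, ← mul_sub, ← sub_mul]
  refine (norm_add_le_of_le (norm_sub_le_of_le hplus hminus) htail).trans_eq ?_
  field_simp
  ring

theorem exp_div_mul_exp_log_add_mul {s : ℂ} (hs : s ≠ 0) (g z : ℂ) :
    cexp s / s * cexp ((log s + g) * z) = cexp (g * z) * (cexp s * s ^ (-(1 - z))) := by
  rw [neg_sub, cpow_sub _ _ hs, cpow_one, cpow_def_of_ne_zero hs, add_mul, Complex.exp_add]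
  ring

theorem verticalIntegral_exp_div_mul_exp_log_add_mul (hc : 0 < c) (g z : ℂ) (T : ℝ) :
    verticalIntegral (fun s ↦ cexp s / s * cexp ((log s + g) * z)) c T =
      cexp (g * z) * verticalIntegral (fun s ↦ cexp s * s ^ (-(1 - z))) c T := by
  rw [verticalIntegral, verticalIntegral, ← intervalIntegral.integral_const_mul]
  congr 1 with t
  rw [exp_div_mul_exp_log_add_mul
    (slitPlane_ne_zero (ofReal_add_mul_I_mem_slitPlane hc t)), mul_assoc]

theorem norm_verticalIntegral_exp_div_mul_exp_sub_le (hc : 0 < c) (g : ℂ) {r : ℝ}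
    (hr : r < 1) {z : ℂ} (hz : ‖z‖ ≤ r) {T : ℝ} (hT : 1 ≤ T) :
    ‖verticalIntegral (fun s ↦ cexp s / s * cexp ((log s + g) * z)) c T -
        2 * π * I * (cexp (g * z) / Gamma (1 - z))‖ ≤
      Real.exp (‖g‖ * r) *
        (2 * Real.exp (c + π * r) * (1 + (1 + r) / (1 - r)) * T ^ (-(1 - r))) := by
  have hr0 : 0 ≤ r := (norm_nonneg z).trans hz
  have hr1 : 0 < 1 - r := sub_pos.2 hr
  have hre : 1 - r ≤ (1 - z).re := sub_le_sub_left ((re_le_norm z).trans hz) 1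
  have hrepos : 0 < (1 - z).re := hr1.trans_le hre
  have him : |(1 - z).im| ≤ r := by simpa using (abs_im_le_norm z).trans hz
  have hnorm : ‖1 - z‖ ≤ 1 + r := (norm_sub_le 1 z).trans (by simpa using hz)
  have hexp : ‖cexp (g * z)‖ ≤ Real.exp (‖g‖ * r) :=
    (norm_exp_le_exp_norm _).trans (by rw [norm_mul]; gcongr)
  calc ‖verticalIntegral (fun s ↦ cexp s / s * cexp ((log s + g) * z)) c T -
          2 * π * I * (cexp (g * z) / Gamma (1 - z))‖
      = ‖cexp (g * z)‖ * ‖verticalIntegral (fun s ↦ cexp s * s ^ (-(1 - z))) c T -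
          2 * π * I / Gamma (1 - z)‖ := by
        rw [verticalIntegral_exp_div_mul_exp_log_add_mul hc, ← norm_mul]
        ring_nf
    _ ≤ Real.exp (‖g‖ * r) * (2 * Real.exp (c + π * |(1 - z).im|) *
          (1 + ‖1 - z‖ / (1 - z).re) * T ^ (-(1 - z).re)) := by
        gcongr
        exact norm_verticalIntegral_exp_mul_cpow_neg_sub_le hc hrepos (by linarith)
    _ ≤ Real.exp (‖g‖ * r) *
          (2 * Real.exp (c + π * r) * (1 + (1 + r) / (1 - r)) * T ^ (-(1 - r))) := by gcongr

theorem tendstoUniformlyOn_verticalIntegral_exp_div_mul_exp (hc : 0 < c) (g : ℂ) {r : ℝ}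
    (hr : r < 1) :
    TendstoUniformlyOn
      (fun T z ↦ verticalIntegral (fun s ↦ cexp s / s * cexp ((log s + g) * z)) c T)
      (fun z ↦ 2 * π * I * (cexp (g * z) / Gamma (1 - z))) atTop (Metric.closedBall 0 r) := by
  have hrate : Tendsto (fun T : ℝ ↦ Real.exp (‖g‖ * r) *
      (2 * Real.exp (c + π * r) * (1 + (1 + r) / (1 - r)) * T ^ (-(1 - r)))) atTop (𝓝 0) := by
    simpa using ((tendsto_rpow_neg_atTop (sub_pos.2 hr)).const_mul _).const_mul _
  refine Metric.tendstoUniformlyOn_iff.2 fun ε hε ↦ ?_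
  filter_upwards [eventually_ge_atTop 1, hrate.eventually_lt_const hε] with T hT hTε z hz
  rw [dist_comm, dist_eq_norm]
  exact (norm_verticalIntegral_exp_div_mul_exp_sub_le hc g hr (mem_closedBall_zero_iff.1 hz)
    hT).trans_lt hTε

/-! ### Taylor coefficients -/

theorem differentiable_exp_mul_div_Gamma_one_sub (g : ℂ) :
    Differentiable ℂ fun z ↦ cexp (g * z) / Gamma (1 - z) := by
  simp only [div_eq_mul_inv]
  exact .mul (by fun_prop) (differentiable_one_div_Gamma.comp (by fun_prop))

theorem continuous_exp_div_ofReal_add_mul_I (hc : 0 < c) :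
    Continuous fun t : ℝ ↦ cexp (c + t * I) / (c + t * I) :=
  .div (by fun_prop) (by fun_prop) fun t ↦
    slitPlane_ne_zero (ofReal_add_mul_I_mem_slitPlane hc t)

theorem continuous_log_ofReal_add_mul_I (hc : 0 < c) :
    Continuous fun t : ℝ ↦ log (c + t * I) :=
  .clog (by fun_prop) (ofReal_add_mul_I_mem_slitPlane hc)

theorem differentiable_verticalIntegral_exp_div_mul_exp (hc : 0 < c) (g : ℂ) (T : ℝ) :
    Differentiable ℂ fun z ↦
      verticalIntegral (fun s ↦ cexp s / s * cexp ((log s + g) * z)) c T := fun z ↦ by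
  simpa only [verticalIntegral, mul_right_comm _ _ I] using
    (hasDerivAt_intervalIntegral_mul_cexp
      ((continuous_exp_div_ofReal_add_mul_I hc).mul_const I)
      ((continuous_log_ofReal_add_mul_I hc).add_const g) (-T) T z).differentiableAt

theorem iteratedDeriv_verticalIntegral_exp_div_mul_exp (hc : 0 < c) (g : ℂ) (T : ℝ)
    (k : ℕ) :
    iteratedDeriv k
        (fun z ↦ verticalIntegral (fun s ↦ cexp s / s * cexp ((log s + g) * z)) c T) =
      fun z ↦
        verticalIntegral (fun s ↦ cexp s / s * (log s + g) ^ k * cexp ((log s + g) * z)) c T := by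
  simpa only [verticalIntegral, mul_right_comm _ _ I] using
    iteratedDeriv_intervalIntegral_mul_cexp
      ((continuous_exp_div_ofReal_add_mul_I hc).mul_const I)
      ((continuous_log_ofReal_add_mul_I hc).add_const g) (-T) T k

theorem tendsto_verticalIntegral_exp_div_mul_log_add_pow (hc : 0 < c) (g : ℂ) (k : ℕ) :
    Tendsto (verticalIntegral (fun s ↦ cexp s / s * (log s + g) ^ k) c) atTop
      (𝓝 (2 * π * I * iteratedDeriv k (fun z ↦ cexp (g * z) / Gamma (1 - z)) 0)) := by
  have hlim := tendsto_iteratedDeriv_of_tendstoUniformlyOn_sphere one_half_pos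
    (fun T ↦ (differentiable_verticalIntegral_exp_div_mul_exp hc g T).diffContOnCl)
    ((differentiable_exp_mul_div_Gamma_one_sub g).const_mul (2 * π * I)).diffContOnCl
    ((tendstoUniformlyOn_verticalIntegral_exp_div_mul_exp hc g one_half_lt_one).mono
      Metric.sphere_subset_closedBall) k
  simpa [iteratedDeriv_verticalIntegral_exp_div_mul_exp hc, iteratedDeriv_const_mul_field]
    using hlim

theorem broadhurst_conjecture_general {c : ℝ} (hc : 0 < c) (g : ℂ) :
    ∃ C : ℕ → ℂ,
      (∀ k : ℕ, Tendsto (fun T : ℝ ↦ 1 / (k ! : ℂ) * (1 / (2 * π * I)) *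
        verticalIntegral (fun s ↦ cexp s / s * (log s + g) ^ k) c T) atTop (𝓝 (C k))) ∧
      ∀ z : ℂ, Summable (fun k : ℕ ↦ ‖C k * z ^ k‖) ∧
        HasSum (fun k : ℕ ↦ C k * z ^ k) (cexp (g * z) / Gamma (1 - z)) := by
  set f : ℂ → ℂ := fun z ↦ cexp (g * z) / Gamma (1 - z)
  have hf : Differentiable ℂ f := differentiable_exp_mul_div_Gamma_one_sub g
  have htaylor (z : ℂ) :
      HasSum (fun k : ℕ ↦ 1 / (k ! : ℂ) * iteratedDeriv k f 0 * z ^ k) (f z) := by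
    simpa [mul_assoc, mul_comm (iteratedDeriv _ f 0)] using hasSum_taylorSeries_of_entire hf 0 z
  refine ⟨fun k ↦ 1 / (k ! : ℂ) * iteratedDeriv k f 0, fun k ↦ ?_,
    fun z ↦ ⟨(htaylor z).summable.norm, htaylor z⟩⟩
  have hlim : Tendsto (verticalIntegral (fun s ↦ cexp s / s * (log s + g) ^ k) c) atTop
      (𝓝 (2 * π * I * iteratedDeriv k f 0)) :=
    tendsto_verticalIntegral_exp_div_mul_log_add_pow hc g k
  convert hlim.const_mul (1 / (k ! : ℂ) * (1 / (2 * π * I))) using 2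
  field_simp

end

/-- The constants `C k` defined by the conditionally convergent contour
integral `C_k = (1/k!) (1/(2πi)) ∫_{c-i∞}^{c+i∞} (e^s/s) (log s + γ)^k ds` (symmetric
limit) satisfy: for every complex `z`, the series `∑ C_k z^k` converges absolutely and
equals `e^{γz}/Γ(1-z)`. -/
theorem broadhurst_conjecture (c : ℝ) (hc : 0 < c) (C : ℕ → ℂ)
    (hC : ∀ k : ℕ,
      Tendsto (fun T : ℝ =>
          (1 / (Nat.factorial k : ℂ)) * (1 / (2 * Real.pi * Complex.I)) *
            ∫ t in (-T)..T,
              (Complex.exp ((c : ℂ) + t * Complex.I) / ((c : ℂ) + t * Complex.I)) *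
                (Complex.log ((c : ℂ) + t * Complex.I) +
                  (Real.eulerMascheroniConstant : ℂ)) ^ k * Complex.I)
        atTop (𝓝 (C k))) :
    ∀ z : ℂ, Summable (fun k : ℕ => ‖C k * z ^ k‖) ∧
      HasSum (fun k : ℕ => C k * z ^ k)
        (Complex.exp ((Real.eulerMascheroniConstant : ℂ) * z) / Complex.Gamma (1 - z)) := by
  obtain ⟨D, hD, hsum⟩ := broadhurst_conjecture_general hc (Real.eulerMascheroniConstant : ℂ)
  obtain rfl : C = D := funext fun k ↦ tendsto_nhds_unique (hC k) (hD k)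
  exact hsum
end

section
/- For integers $k \ge 0$ and real $u \ge 1$ define $I_k(u) = \int_{t_1,\ldots,t_k \ge 1,\ t_1+\cdots+t_k \le u} \frac{dt_1}{t_1}\cdots\frac{dt_k}{t_k}$ (with $I_0(u)=1$), and let $L_k$ be the Dickman polylogarithms defined recursively by $L_0(t)=1$ for all $t>0$, and for $k\ge 1$ by $L_k(t)=0$ for $t\ge 1/k$ and $L_k(t) = -\int_t^{1/k} L_{k-1}(x/(1-x))\,dx/x$ for $0<t<1/k$. Then for every $k \ge 0$ and every $\alpha$ with $0 < \alpha \le 1$, $L_k(\alpha) = \frac{(-1)^k}{k!} I_k(1/\alpha)$. -/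
open MeasureTheory

/-- The iterated integral `I_k(u)`. -/
noncomputable def Ik (k : ℕ) (u : ℝ) : ℝ :=
  ∫ t in {t : Fin k → ℝ | (∀ i, 1 ≤ t i) ∧ (∑ i, t i) ≤ u}, ∏ i, (t i)⁻¹

/-- The Dickman polylogarithms. -/
noncomputable def Lpoly : ℕ → ℝ → ℝ
  | 0, _ => 1
  | (k + 1), t =>
      if ((k : ℝ) + 1)⁻¹ ≤ t then 0
      else -∫ x in t..((k : ℝ) + 1)⁻¹, Lpoly k (x / (1 - x)) / x

/-! Write `∏ tᵢ⁻¹ = ∑ᵢ (∑ⱼ tⱼ)⁻¹ ∏_{j ≠ i} tⱼ⁻¹` and, in the `i`-th summand, take `s = ∑ⱼ tⱼ` as a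
coordinate in place of `tᵢ`. The `n + 1` summands then contribute equally to `I_{n+1}(u)`, so
`I_{n+1}(u) = (n + 1) ∫_{n+1}^u I_n(s - 1) ds/s`. The substitution `s = 1/x` turns this into the
recursion defining `L_{n+1}`, since `1/x - 1` is the reciprocal of `x/(1 - x)`. -/

open Set

theorem prod_inv_eq_sum_inv_mul_prod_removeNth {K : Type*} [Semifield K] {n : ℕ}
    {t : Fin (n + 1) → K} (ht : ∀ i, t i ≠ 0) (hsum : ∑ j, t j ≠ 0) :
    ∏ j, (t j)⁻¹ = ∑ i : Fin (n + 1), (∑ j, t j)⁻¹ * ∏ j, (i.removeNth t j)⁻¹ := by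
  have hfactor (i : Fin (n + 1)) : ∏ j, (i.removeNth t j)⁻¹ = t i * ∏ j, (t j)⁻¹ := by
    rw [Fin.prod_univ_succAbove _ i, mul_inv_cancel_left₀ (ht i)]
    rfl
  simp_rw [hfactor]
  rw [← Finset.mul_sum, ← Finset.sum_mul, inv_mul_cancel_left₀ hsum]

theorem measurePreserving_sum_removeNth {G : Type*} [AddCommMonoid G] [MeasurableSpace G]
    [MeasurableAdd₂ G] (μ : Measure G) [SigmaFinite μ] [μ.IsAddLeftInvariant] {n : ℕ}
    (i : Fin (n + 1)) :
    MeasurePreserving (fun t : Fin (n + 1) → G ↦ (∑ j, t j, i.removeNth t))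
      (Measure.pi fun _ ↦ μ) (μ.prod (Measure.pi fun _ ↦ μ)) := by
  have hshear : MeasurePreserving (fun p : (Fin n → G) × G ↦ (p.1, ∑ j, p.1 j + p.2))
      ((Measure.pi fun _ ↦ μ).prod μ) ((Measure.pi fun _ ↦ μ).prod μ) :=
    (MeasurePreserving.id _).skew_product (g := fun (y : Fin n → G) x ↦ ∑ j, y j + x)
      (by unfold Function.uncurry; fun_prop) (.of_forall fun _ ↦ map_add_left_eq_self μ _)
  convert Measure.measurePreserving_swap.comp (hshear.comp
    (Measure.measurePreserving_swap.comp (measurePreserving_piFinSuccAbove (fun _ ↦ μ) i)))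
    using 2 with t
  rw [← Fin.add_sum_removeNth i, add_comm]
  rfl

theorem setIntegral_prod_eq_integral_section {α β E : Type*} [MeasurableSpace α]
    [MeasurableSpace β] [NormedAddCommGroup E] [NormedSpace ℝ E] {μ : Measure α} {ν : Measure β}
    [SFinite μ] [SFinite ν] {s : Set (α × β)} (hs : MeasurableSet s) {f : α × β → E}
    (hf : IntegrableOn f s (μ.prod ν)) :
    ∫ z in s, f z ∂μ.prod ν = ∫ x, ∫ y in Prod.mk x ⁻¹' s, f (x, y) ∂ν ∂μ := by
  rw [← integral_indicator hs, integral_prod _ ((integrable_indicator_iff hs).2 hf)]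
  refine integral_congr_ae (.of_forall fun x ↦ ?_)
  exact integral_indicator (measurable_prodMk_left hs)

theorem intervalIntegral_inv_smul_comp_inv {E : Type*} [NormedAddCommGroup E] [NormedSpace ℝ E]
    (g : ℝ → E) {a b : ℝ} (h0 : 0 ∉ uIcc a b) :
    ∫ x in a..b, x⁻¹ • g x⁻¹ = ∫ s in b⁻¹..a⁻¹, s⁻¹ • g s := by
  have hne {x : ℝ} (hx : x ∈ uIcc a b) : x ≠ 0 := ne_of_mem_of_not_mem hx h0
  have hsubst := intervalIntegral.integral_deriv_smul_comp_of_deriv_nonpos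
    (f := fun x ↦ x⁻¹) (f' := fun x ↦ -(x ^ 2)⁻¹) (g := fun s ↦ s⁻¹ • g s)
    (continuousOn_inv₀.mono fun x hx ↦ hne hx)
    (fun x hx ↦ hasDerivAt_inv (hne (Ioo_subset_Icc_self hx)))
    (fun x _ ↦ neg_nonpos.2 (by positivity))
  rw [intervalIntegral.integral_symm a⁻¹, ← hsubst, ← intervalIntegral.integral_neg]
  refine intervalIntegral.integral_congr fun x hx ↦ ?_
  simp only [Function.comp_apply, inv_inv, neg_mul, neg_smul, neg_neg, smul_smul, pow_two, mul_inv,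
    inv_mul_cancel_right₀ (hne hx)]

/-- The points of `[1, ∞)ⁿ` with coordinate sum at most `u`: the domain of integration of
`I_n(u)`. -/
def truncatedSimplex (n : ℕ) (u : ℝ) : Set (Fin n → ℝ) :=
  {t | (∀ i, 1 ≤ t i) ∧ ∑ i, t i ≤ u}

/-- The simplex `truncatedSimplex (n + 1) u` in the coordinates `(∑ j, t j, i.removeNth t)`, a
description which does not depend on `i`. -/
def sumFiberedSimplex (n : ℕ) (u : ℝ) : Set (ℝ × (Fin n → ℝ)) :=
  {p | p.1 ≤ u ∧ p.2 ∈ truncatedSimplex n (p.1 - 1)}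

section Simplex

variable {n : ℕ} {u : ℝ}

theorem natCast_le_of_mem_truncatedSimplex {t : Fin n → ℝ} (ht : t ∈ truncatedSimplex n u) :
    (n : ℝ) ≤ u :=
  calc (n : ℝ) = ∑ _i : Fin n, (1 : ℝ) := by simp
    _ ≤ ∑ i, t i := Finset.sum_le_sum fun i _ ↦ ht.1 i
    _ ≤ u := ht.2

theorem preimage_sum_removeNth_sumFiberedSimplex (i : Fin (n + 1)) :
    (fun t : Fin (n + 1) → ℝ ↦ (∑ j, t j, i.removeNth t)) ⁻¹' sumFiberedSimplex n u =
      truncatedSimplex (n + 1) u := by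
  ext t
  simp only [sumFiberedSimplex, truncatedSimplex, mem_preimage, mem_ofPred_eq,
    Fin.forall_iff_succAbove i, ← Fin.add_sum_removeNth i t, Fin.removeNth_apply,
    le_sub_iff_add_le, add_comm _ (1 : ℝ), add_le_add_iff_right]
  tauto

theorem preimage_prodMk_sumFiberedSimplex {s : ℝ} (hs : s ≤ u) :
    Prod.mk s ⁻¹' sumFiberedSimplex n u = truncatedSimplex n (s - 1) := by
  simp [sumFiberedSimplex, hs]

theorem preimage_prodMk_sumFiberedSimplex_of_notMem_Icc {s : ℝ} (hs : s ∉ Icc ((n : ℝ) + 1) u) :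
    Prod.mk s ⁻¹' sumFiberedSimplex n u = ∅ := by
  refine eq_empty_of_forall_notMem fun y ⟨hsu, hy⟩ ↦ hs ⟨?_, hsu⟩
  exact le_sub_iff_add_le.1 (natCast_le_of_mem_truncatedSimplex hy)

theorem isClosed_truncatedSimplex : IsClosed (truncatedSimplex n u) :=
  isClosed_Ici.inter
    (isClosed_le (f := fun t : Fin n → ℝ ↦ ∑ i, t i) (by fun_prop) continuous_const)

theorem isClosed_sumFiberedSimplex : IsClosed (sumFiberedSimplex n u) :=
  (isClosed_le continuous_fst continuous_const).inter
    ((isClosed_Ici.preimage continuous_snd).inter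
      (isClosed_le (f := fun p : ℝ × (Fin n → ℝ) ↦ ∑ i, p.2 i) (by fun_prop) (by fun_prop)))

theorem one_le_fst_of_mem_sumFiberedSimplex {p : ℝ × (Fin n → ℝ)}
    (hp : p ∈ sumFiberedSimplex n u) : 1 ≤ p.1 := by
  linarith [natCast_le_of_mem_truncatedSimplex hp.2, n.cast_nonneg (α := ℝ)]

theorem isCompact_sumFiberedSimplex : IsCompact (sumFiberedSimplex n u) := by
  have hbox : IsCompact (Icc ((1 : ℝ), fun _ : Fin n ↦ (1 : ℝ)) (u, fun _ ↦ u)) := isCompact_Icc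
  refine hbox.of_isClosed_subset isClosed_sumFiberedSimplex fun p hp ↦ ?_
  have hcoord (j : Fin n) : p.2 j ≤ ∑ i, p.2 i :=
    Finset.single_le_sum (fun i _ ↦ zero_le_one.trans (hp.2.1 i)) (Finset.mem_univ j)
  exact ⟨⟨one_le_fst_of_mem_sumFiberedSimplex hp, hp.2.1⟩,
    ⟨hp.1, fun j ↦ by dsimp only; linarith [hcoord j, hp.1, hp.2.2]⟩⟩

theorem integrableOn_sumFiberedSimplex :
    IntegrableOn (fun p ↦ p.1⁻¹ * ∏ j, (p.2 j)⁻¹) (sumFiberedSimplex n u) := by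
  refine ContinuousOn.integrableOn_compact isCompact_sumFiberedSimplex ?_
  refine (continuousOn_fst.inv₀ fun p hp ↦ ?_).mul
    (continuousOn_finsetProd _ fun j _ ↦ ContinuousOn.inv₀ (by fun_prop) fun p hp ↦ ?_)
  · exact (one_pos.trans_le (one_le_fst_of_mem_sumFiberedSimplex hp)).ne'
  · exact (one_pos.trans_le (hp.2.1 j)).ne'

theorem measurePreserving_restrict_truncatedSimplex (i : Fin (n + 1)) :
    MeasurePreserving (fun t : Fin (n + 1) → ℝ ↦ (∑ j, t j, i.removeNth t))
      (volume.restrict (truncatedSimplex (n + 1) u))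
      (volume.restrict (sumFiberedSimplex n u)) := by
  rw [← preimage_sum_removeNth_sumFiberedSimplex i]
  exact (measurePreserving_sum_removeNth volume i).restrict_preimage
    isClosed_sumFiberedSimplex.measurableSet

end Simplex

theorem Ik_zero {u : ℝ} (hu : 0 ≤ u) : Ik 0 u = 1 := by
  simp [Ik, hu, Measure.volume_pi_eq_dirac isEmptyElim]

theorem Ik_succ_eq_setIntegral_sumFiberedSimplex (n : ℕ) (u : ℝ) :
    Ik (n + 1) u = (n + 1) * ∫ p in sumFiberedSimplex n u, p.1⁻¹ * ∏ j, (p.2 j)⁻¹ := by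
  calc Ik (n + 1) u
      = ∫ t in truncatedSimplex (n + 1) u,
          ∑ i : Fin (n + 1), (∑ j, t j)⁻¹ * ∏ j, (i.removeNth t j)⁻¹ := by
        refine setIntegral_congr_fun isClosed_truncatedSimplex.measurableSet fun t ht ↦ ?_
        have hpos (i : Fin (n + 1)) : 0 < t i := one_pos.trans_le (ht.1 i)
        exact prod_inv_eq_sum_inv_mul_prod_removeNth (fun i ↦ (hpos i).ne')
          (Finset.sum_pos (fun i _ ↦ hpos i) Finset.univ_nonempty).ne'
    _ = ∑ i : Fin (n + 1), ∫ t in truncatedSimplex (n + 1) u,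
          (∑ j, t j)⁻¹ * ∏ j, (i.removeNth t j)⁻¹ :=
        integral_finsetSum _ fun i _ ↦ (measurePreserving_restrict_truncatedSimplex
          i).integrable_comp_of_integrable integrableOn_sumFiberedSimplex
    _ = ∑ _i : Fin (n + 1), ∫ p in sumFiberedSimplex n u, p.1⁻¹ * ∏ j, (p.2 j)⁻¹ := by
        refine Finset.sum_congr rfl fun i _ ↦ ?_
        have hΦ := measurePreserving_restrict_truncatedSimplex (u := u) i
        rw [← hΦ.map_eq, integral_map hΦ.aemeasurable (by fun_prop)]
    _ = (n + 1) * ∫ p in sumFiberedSimplex n u, p.1⁻¹ * ∏ j, (p.2 j)⁻¹ := by simp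

theorem Ik_succ (n : ℕ) (u : ℝ) :
    Ik (n + 1) u = (n + 1) * ∫ s in Icc ((n : ℝ) + 1) u, s⁻¹ * Ik n (s - 1) := by
  rw [Ik_succ_eq_setIntegral_sumFiberedSimplex, Measure.volume_eq_prod,
    setIntegral_prod_eq_integral_section isClosed_sumFiberedSimplex.measurableSet
      integrableOn_sumFiberedSimplex,
    ← setIntegral_eq_integral_of_forall_compl_eq_zero (s := Icc ((n : ℝ) + 1) u)]
  · congr 1
    refine setIntegral_congr_fun measurableSet_Icc fun s hs ↦ ?_
    simp only [preimage_prodMk_sumFiberedSimplex hs.2, integral_const_mul]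
    rfl
  · intro s hs
    rw [preimage_prodMk_sumFiberedSimplex_of_notMem_Icc hs, setIntegral_empty]

theorem Ik_succ_eq_zero_of_le {n : ℕ} {u : ℝ} (hu : u ≤ n + 1) : Ik (n + 1) u = 0 := by
  rw [Ik_succ, integral_Icc_eq_integral_Ioc, Ioc_eq_empty hu.not_gt, setIntegral_empty, mul_zero]

theorem Ik_succ_one_div {n : ℕ} {α : ℝ} (hα : 0 < α) (hαn : α ≤ ((n : ℝ) + 1)⁻¹) :
    Ik (n + 1) (1 / α) = (n + 1) * ∫ x in α..((n : ℝ) + 1)⁻¹, Ik n ((1 - x) / x) / x := by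
  have hle : (n : ℝ) + 1 ≤ α⁻¹ := (le_inv_comm₀ hα n.cast_add_one_pos).1 hαn
  have hsubst := intervalIntegral_inv_smul_comp_inv (fun s ↦ Ik n (s - 1))
    (notMem_uIcc_of_lt hα (inv_pos.2 (n.cast_add_one_pos (α := ℝ))))
  simp only [inv_inv, smul_eq_mul] at hsubst
  rw [Ik_succ, one_div, integral_Icc_eq_integral_Ioc, ← intervalIntegral.integral_of_le hle,
    ← hsubst]
  congr 1
  refine intervalIntegral.integral_congr fun x hx ↦ ?_
  have hx0 : x ≠ 0 := (hα.trans_le ((uIcc_of_le hαn ▸ hx).1)).ne'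
  simp only [sub_div, div_self hx0, one_div, inv_mul_eq_div]

theorem Lpoly_eq_Ik_general (k : ℕ) {α : ℝ} (hα : 0 < α) :
    Lpoly k α = (-1) ^ k / (Nat.factorial k : ℝ) * Ik k (1 / α) := by
  induction k generalizing α with
  | zero => rw [Ik_zero (one_div_pos.2 hα).le]; simp [Lpoly]
  | succ k ih =>
    rw [Lpoly]
    split_ifs with hk
    · have hinv : 1 / α ≤ k + 1 := one_div α ▸ inv_le_of_inv_le₀ k.cast_add_one_pos hk
      rw [Ik_succ_eq_zero_of_le hinv, mul_zero]
    · have hαk : α ≤ ((k : ℝ) + 1)⁻¹ := (not_le.1 hk).le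
      have hintegrand : ∫ x in α..((k : ℝ) + 1)⁻¹, Lpoly k (x / (1 - x)) / x =
          ∫ x in α..((k : ℝ) + 1)⁻¹,
            (-1) ^ k / (Nat.factorial k : ℝ) * (Ik k ((1 - x) / x) / x) := by
        refine intervalIntegral.integral_congr_Ioo_of_le hαk fun x ⟨hαx, hxk⟩ ↦ ?_
        have hx1 : x < 1 := hxk.trans_le (inv_le_one_of_one_le₀ (by simp))
        simp only [ih (div_pos (hα.trans hαx) (sub_pos.2 hx1)), one_div_div, mul_div_assoc]
      rw [hintegrand, intervalIntegral.integral_const_mul, Ik_succ_one_div hα hαk,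
        Nat.factorial_succ]
      push_cast
      field_simp
      ring

/-- for every `k ≥ 0` and `0 < α ≤ 1`, `L_k(α) = ((-1)^k / k!) I_k(1/α)`. -/
theorem Lpoly_eq_Ik (k : ℕ) (α : ℝ) (hα0 : 0 < α) (hα1 : α ≤ 1) :
    Lpoly k α = (-1) ^ k / (Nat.factorial k : ℝ) * Ik k (1 / α) :=
  Lpoly_eq_Ik_general k hα0
end

section
/- Let $C_k = \frac{1}{k!}\frac{1}{2\pi i}\int_{1-i\infty}^{1+i\infty} e^s\Big(\frac{(\log s+\gamma)^k}{s^2} - \frac{k(\log s+\gamma)^{k-1}}{s^2}\Big)\,ds$ for integers $k \ge 0$. Then there is a constant $C > 0$ such that $|C_k| \le C(k+1)$ for all $k \ge 0$; in particular the power series $\sum_{k=0}^{\infty} C_k z^k$ converges absolutely for every complex $z$ with $|z| < 1$. -/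
open MeasureTheory Filter Topology

/-!
On the line `Re s = 1` one has `|log s + w| ≤ log (a (1 + |t|))` with `a = exp (π + |w|)`, and
`|s|²` is comparable to `(1 + |t|)²`. The substitution `x = a (1 + |t|)` therefore bounds
`∫ |(log s + w)^k / s²|` by a multiple of `∫_1^∞ (log x)^k / x² dx`, which is `Γ(k + 1) = k!`.
This factorial cancels the one in `C_k`, and so does `k (k - 1)! = k!` from the second term. So the
`C_k` are even bounded, for any complex `w` in place of `γ`.
-/

section RealIntegrals

variable {s : ℝ}

lemma integrableOn_log_rpow_div_sq (hs : 0 < s) :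
    IntegrableOn (fun x : ℝ => Real.log x ^ (s - 1) / x ^ 2) (Set.Ioi 1) := by
  have h := (integrableOn_comp_log_Ioi _ one_pos).2
    (Real.log_one.symm ▸ Real.GammaIntegral_convergent hs)
  refine h.congr_fun (fun x hx => ?_) measurableSet_Ioi
  have hx0 : 0 < x := one_pos.trans hx
  simp only [smul_eq_mul, Real.exp_neg, Real.exp_log hx0]
  field_simp

lemma integral_log_rpow_div_sq (hs : 0 < s) :
    ∫ x in Set.Ioi (1 : ℝ), Real.log x ^ (s - 1) / x ^ 2 = Real.Gamma s := by
  rw [Real.Gamma_eq_integral hs, ← Real.log_one, ← integral_comp_log_Ioi _ one_pos]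
  refine setIntegral_congr_fun measurableSet_Ioi fun x hx => ?_
  have hx0 : 0 < x := one_pos.trans hx
  simp only [smul_eq_mul, Real.exp_neg, Real.exp_log hx0]
  field_simp

lemma integrableOn_log_pow_div_sq (k : ℕ) :
    IntegrableOn (fun x : ℝ => Real.log x ^ k / x ^ 2) (Set.Ioi 1) := by
  simpa using integrableOn_log_rpow_div_sq k.cast_add_one_pos

lemma integral_log_pow_div_sq (k : ℕ) :
    ∫ x in Set.Ioi (1 : ℝ), Real.log x ^ k / x ^ 2 = k.factorial := by
  simpa [Real.Gamma_nat_eq_factorial] using integral_log_rpow_div_sq k.cast_add_one_pos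

end RealIntegrals

section EvenFunctions

variable {E : Type*} [NormedAddCommGroup E] {a : ℝ}

lemma integrable_comp_abs {f : ℝ → E} (hf : IntegrableOn f (Set.Ioi 0)) :
    Integrable fun t => f |t| := by
  have h_pos : IntegrableOn (fun t => f |t|) (Set.Ioi 0) :=
    hf.congr_fun (fun t ht => by rw [abs_of_pos ht]) measurableSet_Ioi
  have h_neg : IntegrableOn (fun t => f |t|) (Set.Iic 0) := by
    rw [integrableOn_Iic_iff_integrableOn_Iio]
    simpa using h_pos.comp_neg
  rw [← integrableOn_univ, ← Set.Iic_union_Ioi (a := (0 : ℝ))]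
  exact h_neg.union h_pos

lemma integrable_comp_mul_one_add_abs (ha : 0 < a) {f : ℝ → E}
    (hf : IntegrableOn f (Set.Ioi a)) : Integrable fun t => f (a * (1 + |t|)) := by
  refine integrable_comp_abs (f := fun t => f (a * (1 + t))) ?_
  have h_scaled : IntegrableOn (fun x => f (a * x)) (Set.Ioi 1) :=
    (integrableOn_Ioi_comp_mul_left_iff f 1 ha).2 (by rwa [mul_one])
  have h_shift := ((measurePreserving_add_left volume (1 : ℝ)).integrableOn_comp_preimage
    (measurableEmbedding_addLeft 1)).2 h_scaled
  simpa [Function.comp_def] using h_shift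

lemma integral_comp_mul_one_add_abs (ha : 0 < a) (f : ℝ → ℝ) :
    ∫ t, f (a * (1 + |t|)) = 2 / a * ∫ x in Set.Ioi a, f x := by
  have h_shift : ∫ t in Set.Ioi (0 : ℝ), f (a * (1 + t)) = ∫ x in Set.Ioi 1, f (a * x) := by
    have h := (measurePreserving_add_left volume (1 : ℝ)).setIntegral_preimage_emb
      (measurableEmbedding_addLeft 1) (fun x => f (a * x)) (Set.Ioi 1)
    simpa using h
  rw [integral_comp_abs (f := fun t => f (a * (1 + t))), h_shift,
    integral_comp_mul_left_Ioi f 1 ha, mul_one, smul_eq_mul, ← mul_assoc, ← div_eq_mul_inv]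

end EvenFunctions

section LogarithmicMajorant

variable {a : ℝ}

lemma integrable_log_pow_div_sq_comp (ha : 1 ≤ a) (k : ℕ) :
    Integrable fun t : ℝ => Real.log (a * (1 + |t|)) ^ k / (a * (1 + |t|)) ^ 2 :=
  integrable_comp_mul_one_add_abs (one_pos.trans_le ha)
    ((integrableOn_log_pow_div_sq k).mono_set (Set.Ioi_subset_Ioi ha))

lemma integral_log_pow_div_sq_comp_le (ha : 1 ≤ a) (k : ℕ) :
    ∫ t : ℝ, Real.log (a * (1 + |t|)) ^ k / (a * (1 + |t|)) ^ 2 ≤ 2 / a * k.factorial := by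
  have h_nonneg : ∀ x ∈ Set.Ioi (1 : ℝ), 0 ≤ Real.log x ^ k / x ^ 2 := fun x hx =>
    div_nonneg (pow_nonneg (Real.log_nonneg hx.le) k) (sq_nonneg x)
  have h_mono : ∫ x in Set.Ioi a, Real.log x ^ k / x ^ 2 ≤
      ∫ x in Set.Ioi 1, Real.log x ^ k / x ^ 2 :=
    setIntegral_mono_set (integrableOn_log_pow_div_sq k)
      (ae_restrict_of_forall_mem measurableSet_Ioi h_nonneg) (Set.Ioi_subset_Ioi ha).eventuallyLE
  rw [integral_comp_mul_one_add_abs (one_pos.trans_le ha) fun x => Real.log x ^ k / x ^ 2,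
    ← integral_log_pow_div_sq k]
  exact mul_le_mul_of_nonneg_left h_mono (by positivity)

end LogarithmicMajorant

lemma norm_log_add_le {s : ℂ} (hs : 1 ≤ ‖s‖) (w : ℂ) :
    ‖Complex.log s + w‖ ≤ Real.log (Real.exp (Real.pi + ‖w‖) * ‖s‖) := by
  have h_log : ‖Complex.log s‖ ≤ Real.log ‖s‖ + Real.pi :=
    calc ‖Complex.log s‖ ≤ |(Complex.log s).re| + |(Complex.log s).im| :=
          Complex.norm_le_abs_re_add_abs_im _
      _ = Real.log ‖s‖ + |s.arg| := by
          rw [Complex.log_re, Complex.log_im, abs_of_nonneg (Real.log_nonneg hs)]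
      _ ≤ Real.log ‖s‖ + Real.pi := by gcongr; exact Complex.abs_arg_le_pi s
  rw [Real.log_mul (Real.exp_ne_zero _) (one_pos.trans_le hs).ne', Real.log_exp]
  linarith [norm_add_le (Complex.log s) w]

section VerticalLine

lemma one_le_norm_one_add_mul_I (t : ℝ) : 1 ≤ ‖(1 + t * Complex.I : ℂ)‖ := by
  simpa using Complex.abs_re_le_norm (1 + t * Complex.I)

lemma norm_one_add_mul_I_le (t : ℝ) : ‖(1 + t * Complex.I : ℂ)‖ ≤ 1 + |t| := by
  simpa using norm_add_le (1 : ℂ) (t * Complex.I)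

lemma one_add_abs_sq_le_norm_one_add_mul_I_sq (t : ℝ) :
    (1 + |t|) ^ 2 ≤ 2 * ‖(1 + t * Complex.I : ℂ)‖ ^ 2 := by
  have h_norm : ‖(1 + t * Complex.I : ℂ)‖ ^ 2 = 1 + |t| ^ 2 := by
    rw [← Complex.normSq_eq_norm_sq, sq_abs]
    simpa using Complex.normSq_add_mul_I 1 t
  rw [h_norm]
  linarith [add_sq_le (a := 1) (b := |t|)]

/-- The function `s ↦ (log s + w) ^ k / s ^ 2` on the line `Re s = 1`, parametrised by
`t = Im s`. The paper's `C_k` is built from the case `w = γ`. -/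
noncomputable def lineLogPow (w : ℂ) (k : ℕ) (t : ℝ) : ℂ :=
  (Complex.log (1 + t * Complex.I) + w) ^ k / (1 + t * Complex.I) ^ 2

lemma norm_lineLogPow_le (w : ℂ) (k : ℕ) (t : ℝ) :
    ‖lineLogPow w k t‖ ≤ 2 * Real.exp (Real.pi + ‖w‖) ^ 2 *
      (Real.log (Real.exp (Real.pi + ‖w‖) * (1 + |t|)) ^ k /
        (Real.exp (Real.pi + ‖w‖) * (1 + |t|)) ^ 2) := by
  set a := Real.exp (Real.pi + ‖w‖)
  have ha : 0 < a := Real.exp_pos _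
  have hs := one_le_norm_one_add_mul_I t
  have h_log : ‖Complex.log (1 + t * Complex.I) + w‖ ≤ Real.log (a * (1 + |t|)) :=
    (norm_log_add_le hs w).trans <| Real.log_le_log (by positivity) <| by
      gcongr
      exact norm_one_add_mul_I_le t
  have h_log_nonneg : 0 ≤ Real.log (a * (1 + |t|)) := (norm_nonneg _).trans h_log
  calc ‖lineLogPow w k t‖
      = ‖Complex.log (1 + t * Complex.I) + w‖ ^ k / ‖(1 + t * Complex.I : ℂ)‖ ^ 2 := by
        rw [lineLogPow, norm_div, norm_pow, norm_pow]
    _ ≤ Real.log (a * (1 + |t|)) ^ k / ((1 + |t|) ^ 2 / 2) := by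
        gcongr
        linarith [one_add_abs_sq_le_norm_one_add_mul_I_sq t]
    _ = 2 * a ^ 2 * (Real.log (a * (1 + |t|)) ^ k / (a * (1 + |t|)) ^ 2) := by
        field_simp

lemma integrable_lineLogPow (w : ℂ) (k : ℕ) : Integrable (lineLogPow w k) := by
  have h_meas : Measurable (lineLogPow w k) := by
    unfold lineLogPow
    fun_prop
  exact ((integrable_log_pow_div_sq_comp (Real.one_le_exp (by positivity)) k).const_mul _).mono'
    h_meas.aestronglyMeasurable (.of_forall (norm_lineLogPow_le w k))

lemma integral_norm_lineLogPow_le (w : ℂ) (k : ℕ) :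
    ∫ t, ‖lineLogPow w k t‖ ≤ 4 * Real.exp (Real.pi + ‖w‖) * k.factorial := by
  have ha : 1 ≤ Real.exp (Real.pi + ‖w‖) := Real.one_le_exp (by positivity)
  have h_mono := integral_mono (integrable_lineLogPow w k).norm
    ((integrable_log_pow_div_sq_comp ha k).const_mul _) (norm_lineLogPow_le w k)
  rw [integral_const_mul] at h_mono
  calc ∫ t, ‖lineLogPow w k t‖
      ≤ 2 * Real.exp (Real.pi + ‖w‖) ^ 2 * (2 / Real.exp (Real.pi + ‖w‖) * k.factorial) :=
        h_mono.trans (by gcongr; exact integral_log_pow_div_sq_comp_le ha k)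
    _ = 4 * Real.exp (Real.pi + ‖w‖) * k.factorial := by
        field_simp
        ring

lemma norm_exp_one_add_mul_I (t : ℝ) : ‖Complex.exp (1 + t * Complex.I)‖ = Real.exp 1 := by
  simp [Complex.norm_exp]

lemma norm_integral_exp_mul_lineLogPow_sub_le (w : ℂ) (k : ℕ) :
    ‖∫ t : ℝ, Complex.exp (1 + t * Complex.I) *
        (lineLogPow w k t - k * lineLogPow w (k - 1) t) * Complex.I‖ ≤
      8 * Real.exp 1 * Real.exp (Real.pi + ‖w‖) * k.factorial := by
  have h_int := (integrable_lineLogPow w k).norm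
  have h_int' := ((integrable_lineLogPow w (k - 1)).norm).const_mul (k : ℝ)
  have h_norm (t : ℝ) : ‖Complex.exp (1 + t * Complex.I) *
      (lineLogPow w k t - k * lineLogPow w (k - 1) t) * Complex.I‖ ≤
        Real.exp 1 * (‖lineLogPow w k t‖ + k * ‖lineLogPow w (k - 1) t‖) := by
    rw [norm_mul, norm_mul, Complex.norm_I, mul_one, norm_exp_one_add_mul_I]
    gcongr
    simpa using norm_sub_le (lineLogPow w k t) (k * lineLogPow w (k - 1) t)
  have h_factorial : (k : ℝ) * (k - 1).factorial ≤ k.factorial := by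
    rcases eq_or_ne k 0 with rfl | hk
    · simp
    · exact_mod_cast (Nat.mul_factorial_pred hk).le
  set a := Real.exp (Real.pi + ‖w‖)
  calc _ ≤ ∫ t, Real.exp 1 * (‖lineLogPow w k t‖ + k * ‖lineLogPow w (k - 1) t‖) :=
        norm_integral_le_of_norm_le ((h_int.add h_int').const_mul _) (.of_forall h_norm)
    _ = Real.exp 1 *
          ((∫ t, ‖lineLogPow w k t‖) + k * ∫ t, ‖lineLogPow w (k - 1) t‖) := by
        rw [integral_const_mul, integral_add h_int h_int', integral_const_mul]
    _ ≤ Real.exp 1 * (4 * a * k.factorial + k * (4 * a * (k - 1).factorial)) := by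
        gcongr <;> exact integral_norm_lineLogPow_le w _
    _ = 4 * Real.exp 1 * a * (k.factorial + k * (k - 1).factorial) := by ring
    _ ≤ 4 * Real.exp 1 * a * (k.factorial + k.factorial) := by gcongr
    _ = 8 * Real.exp 1 * a * k.factorial := by ring

end VerticalLine

lemma summable_norm_mul_pow_of_norm_le {R : Type*} [NormedRing R] [NormOneClass R] {c : ℕ → R}
    {B : ℝ} (hc : ∀ k, ‖c k‖ ≤ B) {z : R} (hz : ‖z‖ < 1) :
    Summable fun k => ‖c k * z ^ k‖ :=
  ((summable_geometric_of_lt_one (norm_nonneg z) hz).mul_left B).of_nonneg_of_le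
    (fun _ => norm_nonneg _) fun k => norm_mul_le_of_le (hc k) (norm_pow_le z k)

theorem Ck_bound_general (w : ℂ) (C : ℕ → ℂ)
    (hC : ∀ k : ℕ, C k =
      (1 / (Nat.factorial k : ℂ)) * (1 / (2 * Real.pi * Complex.I)) *
        ∫ t : ℝ, Complex.exp (1 + t * Complex.I) *
          ((Complex.log (1 + t * Complex.I) + w) ^ k / (1 + t * Complex.I) ^ 2 -
            (k : ℂ) * (Complex.log (1 + t * Complex.I) + w) ^ (k - 1) /
              (1 + t * Complex.I) ^ 2) *
          Complex.I) :
    (∃ B : ℝ, 0 < B ∧ ∀ k : ℕ, ‖C k‖ ≤ B) ∧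
      ∀ z : ℂ, ‖z‖ < 1 → Summable fun k : ℕ => ‖C k * z ^ k‖ := by
  have h_bound (k : ℕ) : ‖C k‖ ≤ 4 * Real.exp 1 * Real.exp (Real.pi + ‖w‖) / Real.pi := by
    simp only [hC, mul_div_assoc (k : ℂ), ← lineLogPow.eq_def]
    calc _ = 1 / k.factorial * (1 / (2 * Real.pi)) * ‖∫ t : ℝ, Complex.exp (1 + t * Complex.I) *
            (lineLogPow w k t - k * lineLogPow w (k - 1) t) * Complex.I‖ := by
          simp [abs_of_pos Real.pi_pos]
      _ ≤ 1 / k.factorial * (1 / (2 * Real.pi)) *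
            (8 * Real.exp 1 * Real.exp (Real.pi + ‖w‖) * k.factorial) := by
          gcongr
          exact norm_integral_exp_mul_lineLogPow_sub_le w k
      _ = 4 * Real.exp 1 * Real.exp (Real.pi + ‖w‖) / Real.pi := by
          field_simp
          norm_num
  exact ⟨⟨_, by positivity, h_bound⟩, fun _ => summable_norm_mul_pow_of_norm_le h_bound⟩

/-- with `C_k = (1/k!)(1/(2πi)) ∫_{1-i∞}^{1+i∞} e^s ((log s+γ)^k/s² -
k(log s+γ)^{k-1}/s²) ds` (absolutely convergent, line `Re s = 1`), there is a constant
`C > 0` with `|C_k| ≤ C (k+1)` for all `k`; in particular `∑ C_k z^k` converges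
absolutely for `|z| < 1`. -/
theorem Ck_bound (C : ℕ → ℂ)
    (hC : ∀ k : ℕ, C k =
      (1 / (Nat.factorial k : ℂ)) * (1 / (2 * Real.pi * Complex.I)) *
        ∫ t : ℝ, Complex.exp (1 + t * Complex.I) *
          ((Complex.log (1 + t * Complex.I) +
              (Real.eulerMascheroniConstant : ℂ)) ^ k / (1 + t * Complex.I) ^ 2 -
            (k : ℂ) * (Complex.log (1 + t * Complex.I) +
              (Real.eulerMascheroniConstant : ℂ)) ^ (k - 1) / (1 + t * Complex.I) ^ 2) *
          Complex.I) :
    (∃ B : ℝ, 0 < B ∧ ∀ k : ℕ, ‖C k‖ ≤ B * (k + 1)) ∧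
      ∀ z : ℂ, ‖z‖ < 1 → Summable fun k : ℕ => ‖C k * z ^ k‖ := by
  obtain ⟨⟨B, hB, h_bound⟩, h_summable⟩ := Ck_bound_general _ C hC
  exact ⟨⟨B, hB, fun k => (h_bound k).trans (le_mul_of_one_le_right hB.le (by simp))⟩, h_summable⟩
end

section
/- For integers $k \ge 0$, real $u \ge 1$, and any $c > 0$, the iterated integral $I_k(u) = \int_{t_1,\ldots,t_k \ge 1,\ t_1+\cdots+t_k \le u} \frac{dt_1}{t_1}\cdots\frac{dt_k}{t_k}$ admits the contour-integral representation $I_k(u) = \frac{1}{2\pi i}\int_{c-i\infty}^{c+i\infty} \frac{e^s}{s}\Big(\int_{1/u}^{\infty} \frac{e^{-ts}}{t}\,dt\Big)^k ds$. -/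
/-!
Since `f s / s` has the primitive `f 0 * log s + G s` on the slit plane, where `G` is a primitive of
the entire function `dslope f 0`, the segment from `c - i T` to `c + i T` may be replaced by the arc
of the circle `|s| = |c + i T| = R` on either side of it: passing to the left arc costs
`2 π i * f 0`, by the mean value property. For `f s = e ^ (s * x)` take the arc on the side of
`re s = c` where `|e ^ (s * x)|` decays. There it equals `e ^ (c * x) * e ^ (-|(R cos θ - c) * x|)`,
so a single estimate bounds the truncated Perron integral uniformly in `T` and identifies its limit.

Fubini and dominated convergence extend Perron's formula to superpositions of exponentials. The
inner integral becomes `∫ e ^ (-s v / u) / v` over `v > 1` after the substitution `t = v / u`, and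
its `k`-th power is the Laplace transform of `(v₁ + ⋯ + v_k) / u` under `∏ dvᵢ / vᵢ`. Perron's
formula thus cuts out the region `1 - (v₁ + ⋯ + v_k) / u > 0`, whose boundary is a null set.
-/

open MeasureTheory Filter Topology

open Complex (I slitPlane)
open scoped Real

section ArcDeformation

lemma exists_hasDerivAt_div_self_of_differentiable {f : ℂ → ℂ} (hf : Differentiable ℂ f) :
    ∃ P : ℂ → ℂ, ∀ s ∈ slitPlane, HasDerivAt P (f s / s) s := by
  have hslope : Differentiable ℂ (dslope f 0) :=
    differentiableOn_univ.mp
      ((Complex.differentiableOn_dslope univ_mem).mpr hf.differentiableOn)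
  obtain ⟨G, hG⟩ := hslope.isExactOn_univ
  refine ⟨fun s ↦ f 0 * Complex.log s + G s, fun s hs ↦ ?_⟩
  have hs₀ : s ≠ 0 := Complex.slitPlane_ne_zero hs
  convert! ((Complex.hasDerivAt_log hs).const_mul (f 0)).add (hG s (Set.mem_univ s)) using 1
  rw [dslope_of_ne f hs₀, slope_def_field]
  field_simp
  ring

variable {c : ℝ}

lemma add_mul_I_mem_slitPlane (hc : 0 < c) (t : ℝ) : (c : ℂ) + t * I ∈ slitPlane :=
  Or.inl (by simpa using hc)

lemma I_mul_integral_vertical_div_self (hc : 0 < c) {f P : ℂ → ℂ} (hf : Continuous f)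
    (hP : ∀ s ∈ slitPlane, HasDerivAt P (f s / s) s) (a b : ℝ) :
    I * ∫ t in a..b, f (c + t * I) / (c + t * I) = P (c + b * I) - P (c + a * I) := by
  have hmem (t : ℝ) : (c : ℂ) + t * I ∈ slitPlane := add_mul_I_mem_slitPlane hc t
  have hline (t : ℝ) : HasDerivAt (fun t : ℝ ↦ (c : ℂ) + t * I) I t := by
    simpa using (Complex.ofRealCLM.hasDerivAt.mul_const I).const_add (c : ℂ)
  have hderiv (t : ℝ) :
      HasDerivAt (fun t : ℝ ↦ P (c + t * I)) (I * (f (c + t * I) / (c + t * I))) t :=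
    ((hP _ (hmem t)).comp t (hline t)).congr_deriv (mul_comm _ _)
  have hcont : Continuous fun t : ℝ ↦ f (c + t * I) / (c + t * I) :=
    .div (by fun_prop) (by fun_prop) fun t ↦ Complex.slitPlane_ne_zero (hmem t)
  rw [← intervalIntegral.integral_const_mul, intervalIntegral.integral_eq_sub_of_hasDerivAt
    (fun t _ ↦ hderiv t) ((hcont.const_mul I).intervalIntegrable _ _)]

lemma circleMap_mem_slitPlane {R θ : ℝ} (hR : 0 < R) (hθ : θ ∈ Set.Ioo (-π) π) :
    circleMap 0 R θ ∈ slitPlane := by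
  have hz : circleMap 0 R θ ≠ 0 := circleMap_ne_center hR.ne'
  refine Complex.mem_slitPlane_iff_arg.mpr ⟨?_, hz⟩
  rw [circleMap_zero, Complex.exp_mul_I, Complex.arg_mul_cos_add_sin_mul_I hR ⟨hθ.1, hθ.2.le⟩]
  exact hθ.2.ne

lemma I_mul_integral_arc {f P : ℂ → ℂ} (hf : Continuous f)
    (hP : ∀ s ∈ slitPlane, HasDerivAt P (f s / s) s) {R a b : ℝ} (hR : 0 < R)
    (ha : a ∈ Set.Ioo (-π) π) (hb : b ∈ Set.Ioo (-π) π) :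
    I * ∫ θ in a..b, f (circleMap 0 R θ) = P (circleMap 0 R b) - P (circleMap 0 R a) := by
  have hderiv : ∀ θ ∈ Set.uIcc a b,
      HasDerivAt (fun θ ↦ P (circleMap 0 R θ)) (I * f (circleMap 0 R θ)) θ := by
    intro θ hθ
    have hmem := circleMap_mem_slitPlane hR (Set.ordConnected_Ioo.uIcc_subset ha hb hθ)
    refine ((hP _ hmem).comp θ (hasDerivAt_circleMap 0 R θ)).congr_deriv ?_
    field_simp [Complex.slitPlane_ne_zero hmem]
  have hcont : Continuous fun θ ↦ f (circleMap 0 R θ) := by fun_prop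
  rw [← intervalIntegral.integral_const_mul, intervalIntegral.integral_eq_sub_of_hasDerivAt
    hderiv ((hcont.const_mul I).intervalIntegrable _ _)]

lemma integral_vertical_div_self_eq_integral_arc (hc : 0 < c) (T : ℝ) {f : ℂ → ℂ}
    (hf : Differentiable ℂ f) :
    ∫ t in (-T)..T, f (c + t * I) / (c + t * I) =
      ∫ θ in (-(c + T * I : ℂ).arg)..(c + T * I : ℂ).arg, f (circleMap 0 ‖(c + T * I : ℂ)‖ θ) := by
  obtain ⟨P, hP⟩ := exists_hasDerivAt_div_self_of_differentiable hf
  set z : ℂ := c + T * I with hz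
  have hz_mem : z ∈ slitPlane := add_mul_I_mem_slitPlane hc T
  have hz_pos : 0 < ‖z‖ := norm_pos_iff.mpr (Complex.slitPlane_ne_zero hz_mem)
  have harg : z.arg ∈ Set.Ioo (-π) π :=
    ⟨Complex.neg_pi_lt_arg z,
      (Complex.arg_le_pi z).lt_of_ne (Complex.mem_slitPlane_iff_arg.mp hz_mem).1⟩
  have harg_neg : -z.arg ∈ Set.Ioo (-π) π := ⟨neg_lt_neg harg.2, neg_lt.mp harg.1⟩
  have hright : circleMap 0 ‖z‖ z.arg = z := by
    rw [circleMap_zero, Complex.norm_mul_exp_arg_mul_I]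
  have hleft : circleMap 0 ‖z‖ (-z.arg) = c + (-T : ℝ) * I := by
    rw [← conj_circleMap_zero, hright, hz]
    simp
  refine mul_left_cancel₀ Complex.I_ne_zero ?_
  rw [I_mul_integral_vertical_div_self hc hf.continuous hP,
    I_mul_integral_arc hf.continuous hP hz_pos harg_neg harg, hright, hleft]

lemma integral_circleMap_of_differentiable {f : ℂ → ℂ} (hf : Differentiable ℂ f) (z : ℂ) (R : ℝ) :
    ∫ θ in (-π)..π, f (circleMap z R θ) = 2 * π * f z := by
  have hperiodic : Function.Periodic (fun θ ↦ f (circleMap z R θ)) (2 * π) :=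
    fun θ ↦ by simp [periodic_circleMap z R θ]
  have hmean : (2 * π)⁻¹ • ∫ θ in 0..2 * π, f (circleMap z R θ) = f z :=
    hf.diffContOnCl.circleAverage
  rw [inv_smul_eq_iff₀ Real.two_pi_pos.ne'] at hmean
  calc ∫ θ in (-π)..π, f (circleMap z R θ)
    _ = ∫ θ in 0..2 * π, f (circleMap z R θ) := by
      convert! hperiodic.intervalIntegral_add_eq (-π) 0 using 2 <;> ring
    _ = 2 * π * f z := by simpa using hmean

end ArcDeformation

section PerronKernel

/-- The integral of `e ^ (s * x) / s` along the segment from `c - T * I` to `c + T * I`, divided by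
`I`: the segment is parametrized by the imaginary part `t`, so that `ds = I * dt`. -/
noncomputable def perronIntegral (c T x : ℝ) : ℂ :=
  ∫ t in (-T)..T, Complex.exp ((c + t * I) * x) / (c + t * I)

variable {c T x : ℝ}

lemma perronIntegral_eq_integral_arc (hc : 0 < c) (T x : ℝ) :
    perronIntegral c T x =
      ∫ θ in (-(c + T * I : ℂ).arg)..(c + T * I : ℂ).arg,
        Complex.exp (circleMap 0 ‖(c + T * I : ℂ)‖ θ * x) :=
  integral_vertical_div_self_eq_integral_arc hc T (f := fun s ↦ Complex.exp (s * x)) (by fun_prop)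

lemma integral_symmetric_eq_add {E : Type*} [NormedAddCommGroup E] [NormedSpace ℝ E] {f : ℝ → E}
    (hf : Continuous f) (a b : ℝ) :
    ∫ θ in (-b)..b, f θ = (∫ θ in (-b)..(-a), f θ) + (∫ θ in (-a)..a, f θ) + ∫ θ in a..b, f θ := by
  have hint := hf.intervalIntegrable (μ := volume)
  rw [intervalIntegral.integral_add_adjacent_intervals (hint _ _) (hint _ _),
    intervalIntegral.integral_add_adjacent_intervals (hint _ _) (hint _ _)]

lemma two_pi_sub_perronIntegral (hc : 0 < c) (T x : ℝ) :
    2 * π - perronIntegral c T x =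
      (∫ θ in (-π)..(-(c + T * I : ℂ).arg), Complex.exp (circleMap 0 ‖(c + T * I : ℂ)‖ θ * x)) +
        ∫ θ in (c + T * I : ℂ).arg..π, Complex.exp (circleMap 0 ‖(c + T * I : ℂ)‖ θ * x) := by
  have hfull := integral_circleMap_of_differentiable
    (f := fun s ↦ Complex.exp (s * x)) (by fun_prop) 0 ‖(c + T * I : ℂ)‖
  rw [integral_symmetric_eq_add (by fun_prop) (c + T * I : ℂ).arg,
    ← perronIntegral_eq_integral_arc hc] at hfull
  rw [zero_mul, Complex.exp_zero, mul_one] at hfull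
  rw [← hfull]
  ring

/-- A majorant for `|e ^ (s * x)|` at the points `s = R * e ^ (i * θ)` lying on the side of the line
`re s = c` where `|e ^ (s * x)| ≤ e ^ (c * x)`. On that side it is an equality; the absolute value
makes a single formula serve both signs of `x`. -/
noncomputable def perronMajorant (c R x θ : ℝ) : ℝ :=
  Real.exp (c * x) * Real.exp (-|(R * Real.cos θ - c) * x|)

lemma perronMajorant_nonneg (c R x θ : ℝ) : 0 ≤ perronMajorant c R x θ := by
  unfold perronMajorant
  positivity

lemma perronMajorant_le (c R x θ : ℝ) : perronMajorant c R x θ ≤ Real.exp (c * x) :=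
  mul_le_of_le_one_right (Real.exp_nonneg _)
    (Real.exp_le_one_iff.mpr (neg_nonpos.mpr (abs_nonneg _)))

@[fun_prop]
lemma continuous_perronMajorant (c R x : ℝ) : Continuous (perronMajorant c R x) := by
  unfold perronMajorant
  fun_prop

lemma norm_integral_arc_cexp_le {R a b : ℝ} (hab : a ≤ b)
    (h : ∀ θ ∈ Set.Ioc a b, (R * Real.cos θ - c) * x ≤ 0) :
    ‖∫ θ in a..b, Complex.exp (circleMap 0 R θ * x)‖ ≤ ∫ θ in a..b, perronMajorant c R x θ := by
  refine intervalIntegral.norm_integral_le_of_norm_le hab (.of_forall fun θ hθ ↦ le_of_eq ?_)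
    ((continuous_perronMajorant c R x).intervalIntegrable _ _)
  rw [perronMajorant, abs_of_nonpos (h θ hθ), Complex.norm_exp, Complex.re_mul_ofReal,
    circleMap_zero_re, ← Real.exp_add]
  ring_nf

lemma le_norm_mul_cos (c T : ℝ) {θ : ℝ} (hθ : |θ| ≤ (c + T * I : ℂ).arg) :
    c ≤ ‖(c + T * I : ℂ)‖ * Real.cos θ := by
  calc c = ‖(c + T * I : ℂ)‖ * Real.cos (c + T * I : ℂ).arg := by simp
    _ ≤ ‖(c + T * I : ℂ)‖ * Real.cos |θ| := by
      gcongr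
      exact Real.cos_le_cos_of_nonneg_of_le_pi (abs_nonneg θ) (Complex.arg_le_pi _) hθ
    _ = ‖(c + T * I : ℂ)‖ * Real.cos θ := by rw [Real.cos_abs]

lemma norm_mul_cos_le (hT : 0 ≤ T) {θ : ℝ} (hθ : (c + T * I : ℂ).arg ≤ |θ|) (hθπ : |θ| ≤ π) :
    ‖(c + T * I : ℂ)‖ * Real.cos θ ≤ c := by
  have harg : 0 ≤ (c + T * I : ℂ).arg := Complex.arg_nonneg_iff.mpr (by simpa using hT)
  calc ‖(c + T * I : ℂ)‖ * Real.cos θ = ‖(c + T * I : ℂ)‖ * Real.cos |θ| := by rw [Real.cos_abs]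
    _ ≤ ‖(c + T * I : ℂ)‖ * Real.cos (c + T * I : ℂ).arg := by
      gcongr
      exact Real.cos_le_cos_of_nonneg_of_le_pi harg hθπ hθ
    _ = c := by simp

lemma norm_perronIntegral_le_of_nonpos (hc : 0 < c) (hT : 0 ≤ T) (hx : x ≤ 0) :
    ‖perronIntegral c T x‖ ≤
      ∫ θ in (-π)..π, perronMajorant c ‖(c + T * I : ℂ)‖ x θ := by
  have harg : 0 ≤ (c + T * I : ℂ).arg := Complex.arg_nonneg_iff.mpr (by simpa using hT)
  have harg_le : (c + T * I : ℂ).arg ≤ π := Complex.arg_le_pi _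
  calc ‖perronIntegral c T x‖
    _ ≤ ∫ θ in (-(c + T * I : ℂ).arg)..(c + T * I : ℂ).arg,
        perronMajorant c ‖(c + T * I : ℂ)‖ x θ := by
      rw [perronIntegral_eq_integral_arc hc]
      refine norm_integral_arc_cexp_le (by linarith) fun θ hθ ↦ ?_
      have hcos := le_norm_mul_cos c T (abs_le.mpr ⟨hθ.1.le, hθ.2⟩)
      exact mul_nonpos_of_nonneg_of_nonpos (sub_nonneg.mpr hcos) hx
    _ ≤ ∫ θ in (-π)..π, perronMajorant c ‖(c + T * I : ℂ)‖ x θ :=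
      intervalIntegral.integral_mono_interval (by linarith) (by linarith) harg_le
        (.of_forall (perronMajorant_nonneg _ _ _))
        ((continuous_perronMajorant _ _ _).intervalIntegrable _ _)

lemma norm_two_pi_sub_perronIntegral_le_of_nonneg (hc : 0 < c) (hT : 0 ≤ T) (hx : 0 ≤ x) :
    ‖2 * π - perronIntegral c T x‖ ≤
      ∫ θ in (-π)..π, perronMajorant c ‖(c + T * I : ℂ)‖ x θ := by
  have harg : 0 ≤ (c + T * I : ℂ).arg := Complex.arg_nonneg_iff.mpr (by simpa using hT)
  have harg_le : (c + T * I : ℂ).arg ≤ π := Complex.arg_le_pi _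
  have hdecay {θ : ℝ} (hθ : (c + T * I : ℂ).arg ≤ |θ|) (hθπ : |θ| ≤ π) :
      (‖(c + T * I : ℂ)‖ * Real.cos θ - c) * x ≤ 0 :=
    mul_nonpos_of_nonpos_of_nonneg (sub_nonpos.mpr (norm_mul_cos_le hT hθ hθπ)) hx
  have hlower := norm_integral_arc_cexp_le (neg_le_neg harg_le) fun θ hθ ↦
    hdecay (le_abs.mpr (Or.inr (le_neg.mp hθ.2))) (abs_le.mpr ⟨hθ.1.le, by linarith [hθ.2]⟩)
  have hupper := norm_integral_arc_cexp_le harg_le fun θ hθ ↦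
    hdecay (le_abs.mpr (Or.inl hθ.1.le)) (abs_le.mpr ⟨by linarith [hθ.1], hθ.2⟩)
  have hmiddle : 0 ≤ ∫ θ in (-(c + T * I : ℂ).arg)..(c + T * I : ℂ).arg,
      perronMajorant c ‖(c + T * I : ℂ)‖ x θ :=
    intervalIntegral.integral_nonneg (by linarith) fun θ _ ↦ perronMajorant_nonneg _ _ _ θ
  rw [two_pi_sub_perronIntegral hc,
    integral_symmetric_eq_add (continuous_perronMajorant _ _ _) (c + T * I : ℂ).arg]
  exact (norm_add_le _ _).trans (by linarith)

theorem norm_perronIntegral_sub_le (hc : 0 < c) (hT : 0 ≤ T) (x : ℝ) :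
    ‖perronIntegral c T x - if 0 < x then (2 * π : ℂ) else 0‖ ≤
      ∫ θ in (-π)..π, perronMajorant c ‖(c + T * I : ℂ)‖ x θ := by
  split_ifs with hx
  · rw [norm_sub_rev]
    exact norm_two_pi_sub_perronIntegral_le_of_nonneg hc hT hx.le
  · rw [sub_zero]
    exact norm_perronIntegral_le_of_nonpos hc hT (not_lt.mp hx)

lemma norm_perronIntegral_le (hc : 0 < c) (hT : 0 ≤ T) (x : ℝ) :
    ‖perronIntegral c T x‖ ≤ 4 * π * Real.exp (c * x) := by
  have herror : ‖perronIntegral c T x - if 0 < x then (2 * π : ℂ) else 0‖ ≤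
      2 * π * Real.exp (c * x) := by
    calc _ ≤ ∫ θ in (-π)..π, perronMajorant c ‖(c + T * I : ℂ)‖ x θ :=
          norm_perronIntegral_sub_le hc hT x
      _ ≤ ∫ _ in (-π)..π, Real.exp (c * x) :=
          intervalIntegral.integral_mono_on (by linarith [Real.pi_pos])
            ((continuous_perronMajorant _ _ _).intervalIntegrable _ _) (by simp)
            fun θ _ ↦ perronMajorant_le _ _ _ θ
      _ = 2 * π * Real.exp (c * x) := by
          rw [intervalIntegral.integral_const, smul_eq_mul]
          ring
  have hmain : ‖if 0 < x then (2 * π : ℂ) else 0‖ ≤ 2 * π * Real.exp (c * x) := by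
    split_ifs with hx
    · simpa [abs_of_pos Real.pi_pos] using
        le_mul_of_one_le_right Real.two_pi_pos.le (Real.one_le_exp (by positivity : 0 ≤ c * x))
    · simpa using by positivity
  linarith [norm_le_norm_sub_add (perronIntegral c T x) (if 0 < x then (2 * π : ℂ) else 0)]

lemma tendsto_perronMajorant_atTop (c : ℝ) {x θ : ℝ} (hx : x ≠ 0) (hθ : Real.cos θ ≠ 0) :
    Tendsto (fun R ↦ perronMajorant c R x θ) atTop (𝓝 0) := by
  have hlin : Tendsto (fun R ↦ |(R * Real.cos θ - c) * x|) atTop atTop := by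
    have hscaled : Tendsto (fun R ↦ R * |Real.cos θ * x|) atTop atTop :=
      tendsto_id.atTop_mul_const (abs_pos.mpr (mul_ne_zero hθ hx))
    refine tendsto_atTop_mono' _ ?_ (tendsto_atTop_add_const_right _ (-|c * x|) hscaled)
    filter_upwards [eventually_ge_atTop 0] with R hR
    calc R * |Real.cos θ * x| + -|c * x|
      _ = |R * (Real.cos θ * x)| - |c * x| := by rw [abs_mul R, abs_of_nonneg hR, sub_eq_add_neg]
      _ ≤ |R * (Real.cos θ * x) - c * x| := abs_sub_abs_le_abs_sub _ _
      _ = |(R * Real.cos θ - c) * x| := by ring_nf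
  simpa [perronMajorant] using
    (Real.tendsto_exp_neg_atTop_nhds_zero.comp hlin).const_mul (Real.exp (c * x))

lemma tendsto_integral_perronMajorant_atTop (c : ℝ) (hx : x ≠ 0) :
    Tendsto (fun R ↦ ∫ θ in (-π)..π, perronMajorant c R x θ) atTop (𝓝 0) := by
  have hcos : ∀ᵐ θ : ℝ, Real.cos θ ≠ 0 := by
    filter_upwards [(Set.countable_range fun k : ℤ ↦ (2 * k + 1) * π / 2).ae_notMem volume]
      with θ hθ hzero
    obtain ⟨k, rfl⟩ := Real.cos_eq_zero_iff.mp hzero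
    exact hθ ⟨k, rfl⟩
  rw [← intervalIntegral.integral_zero (a := -π) (b := π) (μ := volume) (E := ℝ)]
  refine intervalIntegral.tendsto_integral_filter_of_dominated_convergence
    (fun _ ↦ Real.exp (c * x)) (.of_forall fun R ↦ by fun_prop)
    (.of_forall fun R ↦ .of_forall fun θ _ ↦ ?_) (by simp)
    (hcos.mono fun θ hθ _ ↦ tendsto_perronMajorant_atTop c hx hθ)
  rw [Real.norm_of_nonneg (perronMajorant_nonneg _ _ _ _)]
  exact perronMajorant_le _ _ _ _

theorem tendsto_perronIntegral_atTop (hc : 0 < c) (hx : x ≠ 0) :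
    Tendsto (fun T ↦ perronIntegral c T x) atTop (𝓝 (if 0 < x then (2 * π : ℂ) else 0)) := by
  have hradius : Tendsto (fun T : ℝ ↦ ‖(c + T * I : ℂ)‖) atTop atTop :=
    tendsto_atTop_mono (fun T ↦ by simpa using Complex.im_le_norm (c + T * I)) tendsto_id
  refine tendsto_iff_norm_sub_tendsto_zero.mpr (squeeze_zero' (.of_forall fun T ↦ norm_nonneg _) ?_
    ((tendsto_integral_perronMajorant_atTop c hx).comp hradius))
  filter_upwards [eventually_ge_atTop 0] with T hT
  exact norm_perronIntegral_sub_le hc hT x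

lemma continuous_perronIntegral (hc : 0 < c) (T : ℝ) : Continuous (perronIntegral c T) := by
  refine intervalIntegral.continuous_parametric_intervalIntegral_of_continuous' ?_ _ _
  exact .div (by fun_prop) (by fun_prop)
    fun p ↦ Complex.slitPlane_ne_zero (add_mul_I_mem_slitPlane hc p.2)

end PerronKernel

section Superposition

variable {c : ℝ} {Ω E : Type*} [MeasurableSpace Ω] {ν : Measure Ω} [SFinite ν]
  [NormedAddCommGroup E] [NormedSpace ℂ E] {Λ : Ω → ℝ} {g : Ω → E}

lemma integrable_cexp_smul_div (hc : 0 < c) (hΛ : AEMeasurable Λ ν)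
    (hg : Integrable (fun ω ↦ Complex.exp (c * Λ ω) • g ω) ν) (μ : Measure ℝ)
    [IsFiniteMeasure μ] :
    Integrable
      (fun p : ℝ × Ω ↦ (Complex.exp ((c + p.1 * I) * Λ p.2) / (c + p.1 * I)) • g p.2)
      (μ.prod ν) := by
  have hbound (p : ℝ × Ω) : ‖Complex.exp (p.1 * I * Λ p.2) / (c + p.1 * I)‖ ≤ 1 / c := by
    have hre : c ≤ ‖(c + p.1 * I : ℂ)‖ := by
      simpa using Complex.re_le_norm (c + p.1 * I)
    rw [norm_div, mul_right_comm, ← Complex.ofReal_mul, Complex.norm_exp_ofReal_mul_I]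
    gcongr
  have hmeas : AEStronglyMeasurable
      (fun p : ℝ × Ω ↦ Complex.exp (p.1 * I * Λ p.2) / (c + p.1 * I)) (μ.prod ν) := by
    have : AEMeasurable (fun p : ℝ × Ω ↦ Λ p.2) (μ.prod ν) := hΛ.comp_snd
    exact AEMeasurable.aestronglyMeasurable (by fun_prop)
  refine ((hg.comp_snd μ).bdd_smul (1 / c) hmeas (.of_forall hbound)).congr (.of_forall fun p ↦ ?_)
  rw [Pi.smul_apply', smul_smul, div_mul_eq_mul_div, ← Complex.exp_add]
  ring_nf

lemma integral_integral_cexp_smul_div [CompleteSpace E] (hc : 0 < c)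
    (hΛ : AEMeasurable Λ ν) (hg : Integrable (fun ω ↦ Complex.exp (c * Λ ω) • g ω) ν) (T : ℝ) :
    ∫ t in (-T)..T, ∫ ω, (Complex.exp ((c + t * I) * Λ ω) / (c + t * I)) • g ω ∂ν =
      ∫ ω, perronIntegral c T (Λ ω) • g ω ∂ν := by
  have : IsFiniteMeasure (volume.restrict (Set.uIoc (-T) T)) :=
    isFiniteMeasure_restrict.mpr (by simp [Set.uIoc])
  rw [intervalIntegral_integral_swap (integrable_cexp_smul_div hc hΛ hg _)]
  simp only [perronIntegral, intervalIntegral.integral_smul_const]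

theorem tendsto_integral_integral_cexp_smul_div [CompleteSpace E] (hc : 0 < c)
    (hΛ : AEMeasurable Λ ν) (hg : Integrable (fun ω ↦ Complex.exp (c * Λ ω) • g ω) ν)
    (hne : ∀ᵐ ω ∂ν, Λ ω ≠ 0) :
    Tendsto (fun T : ℝ ↦
        ∫ t in (-T)..T, ∫ ω, (Complex.exp ((c + t * I) * Λ ω) / (c + t * I)) • g ω ∂ν)
      atTop (𝓝 ((2 * π : ℂ) • ∫ ω in {ω | 0 < Λ ω}, g ω ∂ν)) := by
  have hlim : (2 * π : ℂ) • ∫ ω in {ω | 0 < Λ ω}, g ω ∂ν =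
      ∫ ω, (if 0 < Λ ω then (2 * π : ℂ) else 0) • g ω ∂ν := by
    rw [← integral_smul]
    refine (integral_indicator₀ (hΛ.nullMeasurableSet_preimage measurableSet_Ioi)).symm.trans ?_
    congr with ω
    by_cases hω : 0 < Λ ω <;> simp [hω]
  have hg_meas : AEStronglyMeasurable g ν := by
    have hexp : AEStronglyMeasurable (fun ω ↦ Complex.exp (-(c * Λ ω))) ν :=
      AEMeasurable.aestronglyMeasurable (by fun_prop)
    refine (hexp.smul hg.aestronglyMeasurable).congr (.of_forall fun ω ↦ ?_)
    simp [smul_smul, ← Complex.exp_add]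
  simp only [integral_integral_cexp_smul_div hc hΛ hg]
  rw [hlim]
  refine tendsto_integral_filter_of_dominated_convergence
    (fun ω ↦ 4 * π * ‖Complex.exp (c * Λ ω) • g ω‖) (.of_forall fun T ↦ ?_) ?_
    (hg.norm.const_mul _) (hne.mono fun ω hω ↦ (tendsto_perronIntegral_atTop hc hω).smul_const _)
  · have := (continuous_perronIntegral hc T).measurable.comp_aemeasurable hΛ
    exact this.aestronglyMeasurable.smul hg_meas
  · filter_upwards [eventually_ge_atTop 0] with T hT
    refine .of_forall fun ω ↦ ?_
    rw [norm_smul, norm_smul, ← mul_assoc, ← Complex.ofReal_mul, Complex.norm_exp_ofReal]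
    gcongr
    exact norm_perronIntegral_le hc hT _

end Superposition

section ConvolutionPower

lemma cexp_mul_sub_sum_mul_prod {ι α : Type*} [Fintype ι] (s : ℂ) (x₀ : ℝ) (a : α → ℝ)
    (w : α → ℂ) (v : ι → α) :
    Complex.exp (s * (x₀ - ∑ i, a (v i) : ℝ)) * ∏ i, w (v i) =
      Complex.exp (s * x₀) * ∏ i, (Complex.exp (-(s * a (v i))) * w (v i)) := by
  rw [Finset.prod_mul_distrib, ← Complex.exp_sum, ← mul_assoc, ← Complex.exp_add,
    Finset.sum_neg_distrib, ← Finset.mul_sum]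
  push_cast
  ring_nf

variable {c x₀ : ℝ} {ι α : Type*} [Fintype ι] [MeasurableSpace α] {μ : Measure α} [SigmaFinite μ]
  {a : α → ℝ} {w : α → ℂ}

theorem tendsto_integral_cexp_div_mul_integral_pow (hc : 0 < c) (ha : AEMeasurable a μ)
    (hw : Integrable (fun v ↦ Complex.exp (-(c * a v)) * w v) μ)
    (hne : ∀ᵐ v ∂Measure.pi fun _ : ι ↦ μ, ∑ i, a (v i) ≠ x₀) :
    Tendsto (fun T : ℝ ↦ ∫ t in (-T)..T, Complex.exp ((c + t * I) * x₀) / (c + t * I) *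
        (∫ v, Complex.exp (-((c + t * I) * a v)) * w v ∂μ) ^ Fintype.card ι)
      atTop (𝓝 (2 * π *
        ∫ v in {v | ∑ i, a (v i) < x₀}, ∏ i, w (v i) ∂Measure.pi fun _ : ι ↦ μ)) := by
  have hsum : AEMeasurable (fun v : ι → α ↦ x₀ - ∑ i, a (v i)) (Measure.pi fun _ ↦ μ) := by
    refine aemeasurable_const.sub (Finset.aemeasurable_fun_sum _ fun i _ ↦ ?_)
    exact ha.comp_quasiMeasurePreserving (Measure.quasiMeasurePreserving_eval _ i)
  have hint : Integrable (fun v : ι → α ↦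
      Complex.exp (c * (x₀ - ∑ i, a (v i) : ℝ)) • ∏ i, w (v i)) (Measure.pi fun _ ↦ μ) := by
    simp only [smul_eq_mul, cexp_mul_sub_sum_mul_prod]
    exact (Integrable.fintype_prod fun _ ↦ hw).const_mul _
  have hfactor (s : ℂ) :
      ∫ v : ι → α, (Complex.exp (s * (x₀ - ∑ i, a (v i) : ℝ)) / s) * ∏ i, w (v i)
          ∂(Measure.pi fun _ ↦ μ) =
        Complex.exp (s * x₀) / s *
          (∫ v, Complex.exp (-(s * a v)) * w v ∂μ) ^ Fintype.card ι := by
    simp only [div_mul_eq_mul_div, cexp_mul_sub_sum_mul_prod, integral_div,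
      integral_const_mul]
    rw [integral_fintype_prod_eq_pow fun v ↦ Complex.exp (-(s * a v)) * w v]
  have hne' := hne.mono fun v hv ↦ sub_ne_zero.mpr hv.symm
  simpa only [smul_eq_mul, hfactor, sub_pos] using
    tendsto_integral_integral_cexp_smul_div hc hsum hint hne'

end ConvolutionPower

section IteratedIntegral

variable {u : ℝ}

lemma ae_sum_ne {ι : Type*} [Fintype ι] (hu : u ≠ 0) : ∀ᵐ v : ι → ℝ, ∑ i, v i ≠ u := by
  let H : AffineSubspace ℝ (ι → ℝ) :=
    (AffineSubspace.mk' u ⊥).comap (∑ i, LinearMap.proj i : (ι → ℝ) →ₗ[ℝ] ℝ).toAffineMap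
  have hmem (v : ι → ℝ) : v ∈ H ↔ ∑ i, v i = u := by
    simp [H, AffineSubspace.mem_comap, AffineSubspace.mem_mk', sub_eq_zero]
  have hzero : (0 : ι → ℝ) ∉ H := by simpa [hmem] using hu.symm
  have hnull : volume (H : Set (ι → ℝ)) = 0 :=
    Measure.addHaar_affineSubspace volume H fun htop ↦ hzero (htop ▸ AffineSubspace.mem_top ..)
  filter_upwards [measure_eq_zero_iff_ae_notMem.mp hnull] with v hv
  exact mt (hmem v).mpr hv

lemma integral_Ioi_cexp_div (hu : 0 < u) (s : ℂ) :
    ∫ x in Set.Ioi (1 / u), Complex.exp (-(x : ℂ) * s) / (x : ℂ) =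
      ∫ v in Set.Ioi (1 : ℝ), Complex.exp (-(s * (v / u : ℝ))) * (v : ℂ)⁻¹ := by
  have hscale := integral_comp_mul_left_Ioi'
    (fun x : ℝ ↦ Complex.exp (-(x : ℂ) * s) / (x : ℂ)) 1 (inv_pos.mpr hu)
  rw [one_div, ← mul_one u⁻¹, ← hscale, ← integral_smul]
  congr with v
  rw [Complex.real_smul]
  push_cast
  field_simp [hu.ne']

lemma integrableOn_cexp_neg_mul_inv {b : ℝ} (hb : 0 < b) :
    IntegrableOn (fun v : ℝ ↦ Complex.exp (-(b * v)) * (v : ℂ)⁻¹) (Set.Ioi 1) := by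
  have hexp : IntegrableOn (fun v : ℝ ↦ Complex.exp (-(b * v))) (Set.Ioi 1) := by
    have : IntegrableOn (fun v : ℝ ↦ (Real.exp (-b * v) : ℂ)) (Set.Ioi 1) :=
      Integrable.ofReal (exp_neg_integrableOn_Ioi 1 hb)
    simpa using this
  refine Integrable.mul_bdd (c := 1) hexp (by fun_prop) ?_
  filter_upwards [ae_restrict_mem measurableSet_Ioi] with v hv
  simpa using inv_le_one_of_one_le₀ (hv.out.le.trans (le_abs_self v))

lemma pi_restrict_Ioi_eq_restrict_Ici {ι : Type*} [Fintype ι] (b : ℝ) :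
    Measure.pi (fun _ : ι ↦ volume.restrict (Set.Ioi b)) = volume.restrict {v | ∀ i, b ≤ v i} := by
  rw [← Measure.restrict_pi_pi, ← volume_pi]
  exact Measure.restrict_congr_set Measure.univ_pi_Ioi_ae_eq_Ici

lemma ofReal_Ik (hu : 0 < u) (k : ℕ) :
    (Ik k u : ℂ) = ∫ v in {v : Fin k → ℝ | ∑ i, v i / u < 1}, ∏ i, (v i : ℂ)⁻¹
      ∂Measure.pi fun _ ↦ volume.restrict (Set.Ioi 1) := by
  have hset : {v : Fin k → ℝ | (∀ i, 1 ≤ v i) ∧ ∑ i, v i ≤ u} =ᵐ[volume]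
      ({v | ∑ i, v i / u < 1} ∩ {v | ∀ i, 1 ≤ v i} : Set (Fin k → ℝ)) := by
    filter_upwards [ae_sum_ne (ι := Fin k) hu.ne'] with v hv
    refine propext ?_
    change (_ ∧ _) ↔ (∑ i, v i / u < 1 ∧ _)
    rw [and_comm, ← Finset.sum_div, div_lt_one hu, hv.le_iff_lt]
    rfl
  rw [pi_restrict_Ioi_eq_restrict_Ici, Measure.restrict_restrict (by measurability),
    ← setIntegral_congr_set hset, Ik, ← integral_complex_ofReal]
  push_cast
  rfl

end IteratedIntegral

theorem Ik_contour_representation_general (k : ℕ) (u : ℝ) (hu : 0 < u) (c : ℝ) (hc : 0 < c) :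
    Tendsto (fun T : ℝ ↦
        (1 / (2 * π * I)) *
          ∫ t in (-T)..T, (Complex.exp (c + t * I) / (c + t * I)) *
            (∫ x in Set.Ioi (1 / u), Complex.exp (-(x : ℂ) * (c + t * I)) / (x : ℂ)) ^ k * I)
      atTop (𝓝 (Ik k u : ℂ)) := by
  have hint : IntegrableOn (fun v : ℝ ↦ Complex.exp (-(c * (v / u : ℝ))) * (v : ℂ)⁻¹)
      (Set.Ioi 1) := by
    convert! integrableOn_cexp_neg_mul_inv (div_pos hc hu) using 4 with v
    push_cast
    ring
  have hne : ∀ᵐ v : Fin k → ℝ ∂Measure.pi fun _ ↦ volume.restrict (Set.Ioi 1),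
      ∑ i, v i / u ≠ 1 := by
    rw [pi_restrict_Ioi_eq_restrict_Ici]
    filter_upwards [ae_restrict_of_ae (ae_sum_ne hu.ne')] with v hv
    rwa [← Finset.sum_div, Ne, div_eq_one_iff_eq hu.ne']
  have hpow := tendsto_integral_cexp_div_mul_integral_pow hc (by fun_prop) hint hne
  simp only [← ofReal_Ik hu, ← integral_Ioi_cexp_div hu, Fintype.card_fin, Complex.ofReal_one,
    mul_one] at hpow
  convert! hpow.const_mul (1 / (2 * π : ℂ)) using 1
  · ext T
    rw [intervalIntegral.integral_mul_const]
    field_simp [Complex.I_ne_zero]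
  · field_simp

/-- for `k ≥ 0`, `u ≥ 1` and `c > 0`,
`I_k(u) = (1/(2πi)) ∫_{c-i∞}^{c+i∞} (e^s/s) (∫_{1/u}^∞ e^{-ts}/t dt)^k ds`
(symmetric limit). -/
theorem Ik_contour_representation (k : ℕ) (u : ℝ) (hu : 1 ≤ u) (c : ℝ) (hc : 0 < c) :
    Tendsto (fun T : ℝ =>
        (1 / (2 * Real.pi * Complex.I)) *
          ∫ t in (-T)..T,
            (Complex.exp ((c : ℂ) + t * Complex.I) / ((c : ℂ) + t * Complex.I)) *
              (∫ x in Set.Ioi (1 / u),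
                  Complex.exp (-(x : ℂ) * ((c : ℂ) + t * Complex.I)) / (x : ℂ)) ^ k *
              Complex.I)
      atTop (𝓝 (Ik k u : ℂ)) :=
  Ik_contour_representation_general k u (one_pos.trans_le hu) c hc
end

section
/- For every complex number $s$ with $\mathrm{Re}(s) > 0$, $\int_0^1 \frac{1 - e^{-ts}}{t}\,dt - \int_1^{\infty} \frac{e^{-ts}}{t}\,dt = \log s + \gamma$, where $\log s$ is the principal branch of the logarithm and $\gamma$ is the Euler–Mascheroni constant. -/
/-!
Differentiating under the integral sign in `s` and using `∫ t in (0, ∞), exp (-t * s) = s⁻¹` proves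
the Frullani formula `∫ t in (0, ∞), (exp (-t * w) - exp (-t * s)) / t = log s - log w` on the right
half-plane. Splitting this integral at `a` and inserting `1` in the numerators over `(0, a)` writes
it as the difference of the cut-off integrals at `s` and at `w`, so it is enough to evaluate the
cut-off integral at `w = 1`. Integration by parts against `log t` turns it into
`log a - ∫ t in (0, ∞), log t * exp (-t)`, and the last integral is `Γ'(1) = -γ`.
-/

open MeasureTheory

section

open Set Filter Topology Asymptotics

variable {s w : ℂ} {a : ℝ}

theorem norm_cexp_neg_mul (s : ℂ) (t : ℝ) :
    ‖Complex.exp (-(t : ℂ) * s)‖ = Real.exp (-s.re * t) := by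
  simp [Complex.norm_exp, mul_comm]

theorem integrableOn_cexp_neg_mul_div_Ioi (hs : 0 < s.re) (ha : 0 < a) :
    IntegrableOn (fun t : ℝ ↦ Complex.exp (-(t : ℂ) * s) / t) (Ioi a) := by
  have hexp : IntegrableOn (fun t : ℝ ↦ Complex.exp (-(t : ℂ) * s)) (Ioi a) := by
    simpa [mul_comm] using integrableOn_exp_mul_complex_Ioi (a := -s) (by simpa) a
  refine hexp.mul_bdd (c := a⁻¹) (g := fun t : ℝ ↦ (t : ℂ)⁻¹) (by fun_prop) ?_
  filter_upwards [ae_restrict_mem measurableSet_Ioi] with t (ht : a < t)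
  simpa [abs_of_pos (ha.trans ht)] using inv_anti₀ ha ht.le

theorem intervalIntegrable_one_sub_cexp_neg_mul_div (s : ℂ) (a b : ℝ) :
    IntervalIntegrable (fun t : ℝ ↦ (1 - Complex.exp (-(t : ℂ) * s)) / t) volume a b := by
  let f : ℂ → ℂ := fun z ↦ -Complex.exp (-z * s)
  have hf : Differentiable ℂ f := by fun_prop
  have hslope : Continuous (dslope f 0) :=
    continuousOn_univ.1 <| (continuousOn_dslope univ_mem).2 ⟨hf.continuous.continuousOn, hf 0⟩
  refine ((hslope.comp Complex.continuous_ofReal).intervalIntegrable a b).congr_ae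
    (ae_restrict_of_ae ?_)
  filter_upwards [Measure.ae_ne volume 0] with t ht
  simp [f, dslope_of_ne _ (Complex.ofReal_ne_zero.2 ht), slope_def_field, neg_add_eq_sub]

theorem integral_cexp_neg_mul_Ioi_zero (hs : 0 < s.re) :
    ∫ t in Ioi (0 : ℝ), Complex.exp (-(t : ℂ) * s) = s⁻¹ := by
  simpa [mul_comm, neg_div_neg_eq] using integral_exp_mul_complex_Ioi (a := -s) (by simpa) 0

theorem intervalIntegrable_cexp_sub_cexp_div (w s : ℂ) (a b : ℝ) :
    IntervalIntegrable
      (fun t : ℝ ↦ (Complex.exp (-(t : ℂ) * w) - Complex.exp (-(t : ℂ) * s)) / t) volume a b := by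
  refine ((intervalIntegrable_one_sub_cexp_neg_mul_div s a b).sub
    (intervalIntegrable_one_sub_cexp_neg_mul_div w a b)).congr fun t _ ↦ ?_
  ring

theorem integrableOn_cexp_sub_cexp_div_Ioi_zero (hw : 0 < w.re) (hs : 0 < s.re) :
    IntegrableOn (fun t : ℝ ↦ (Complex.exp (-(t : ℂ) * w) - Complex.exp (-(t : ℂ) * s)) / t)
      (Ioi 0) := by
  rw [← Ioc_union_Ioi_eq_Ioi zero_le_one, integrableOn_union,
    ← intervalIntegrable_iff_integrableOn_Ioc_of_le zero_le_one]
  refine ⟨intervalIntegrable_cexp_sub_cexp_div w s 0 1, ?_⟩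
  simp_rw [sub_div]
  exact (integrableOn_cexp_neg_mul_div_Ioi hw one_pos).sub
    (integrableOn_cexp_neg_mul_div_Ioi hs one_pos)

theorem hasDerivAt_integral_cexp_sub_cexp_div_Ioi_zero (hw : 0 < w.re) (hs : 0 < s.re) :
    HasDerivAt
      (fun z ↦ ∫ t in Ioi (0 : ℝ), (Complex.exp (-(t : ℂ) * w) - Complex.exp (-(t : ℂ) * z)) / t)
      s⁻¹ s := by
  have hnhds : {z : ℂ | s.re / 2 < z.re} ∈ 𝓝 s :=
    (Complex.continuous_re.tendsto s).eventually_const_lt (half_lt_self hs)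
  have hint {z : ℂ} (hz : s.re / 2 < z.re) :=
    integrableOn_cexp_sub_cexp_div_Ioi_zero hw ((half_pos hs).trans hz)
  rw [← integral_cexp_neg_mul_Ioi_zero hs]
  refine (hasDerivAt_integral_of_dominated_loc_of_deriv_le (μ := volume.restrict (Ioi 0))
    (F := fun z t ↦ (Complex.exp (-(t : ℂ) * w) - Complex.exp (-(t : ℂ) * z)) / t)
    (F' := fun z t ↦ Complex.exp (-(t : ℂ) * z))
    (bound := fun t ↦ Real.exp (-(s.re / 2) * t)) hnhds ?_ (hint (half_lt_self hs)) (by fun_prop) ?_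
    (integrableOn_exp_mul_Ioi (by linarith) 0) ?_).2
  · filter_upwards [hnhds] with z hz using (hint hz).aestronglyMeasurable
  · filter_upwards [ae_restrict_mem measurableSet_Ioi] with t (ht : 0 < t) z (hz : s.re / 2 < z.re)
    rw [norm_cexp_neg_mul]
    gcongr
  · filter_upwards [ae_restrict_mem measurableSet_Ioi] with t (ht : 0 < t) z _
    have hexp := ((hasDerivAt_id z).const_mul (-(t : ℂ))).cexp
    refine ((hexp.const_sub _).div_const (t : ℂ)).congr_deriv ?_
    have : (t : ℂ) ≠ 0 := Complex.ofReal_ne_zero.2 ht.ne'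
    simp only [id]
    field_simp

theorem integral_cexp_sub_cexp_div_Ioi_zero (hw : 0 < w.re) (hs : 0 < s.re) :
    ∫ t in Ioi (0 : ℝ), (Complex.exp (-(t : ℂ) * w) - Complex.exp (-(t : ℂ) * s)) / t =
      Complex.log s - Complex.log w := by
  have hintegral {z : ℂ} (hz : 0 < z.re) := hasDerivAt_integral_cexp_sub_cexp_div_Ioi_zero hw hz
  have hlog {z : ℂ} (hz : 0 < z.re) :=
    (Complex.hasDerivAt_log (Or.inl hz)).sub_const (Complex.log w)
  exact (isOpen_lt continuous_const Complex.continuous_re).eqOn_of_deriv_eq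
    (convex_halfSpace_re_gt 0).isPreconnected
    (fun z hz ↦ (hintegral hz).differentiableAt.differentiableWithinAt)
    (fun z hz ↦ (hlog hz).differentiableAt.differentiableWithinAt)
    (fun z hz ↦ (hintegral hz).deriv.trans (hlog hz).deriv.symm) hw (by simp) hs

theorem intervalIntegrable_log_mul_cexp_neg_mul (s : ℂ) (a b : ℝ) :
    IntervalIntegrable (fun t : ℝ ↦ (Real.log t : ℂ) * Complex.exp (-(t : ℂ) * s)) volume a b :=
  have hlog : IntervalIntegrable Real.log volume a b := intervalIntegral.intervalIntegrable_log'
  IntervalIntegrable.mul_continuousOn ⟨hlog.1.ofReal, hlog.2.ofReal⟩ (by fun_prop)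

theorem isLittleO_cexp_neg_mul_rpow_atTop (hs : 0 < s.re) (b : ℝ) :
    (fun t : ℝ ↦ Complex.exp (-(t : ℂ) * s)) =o[atTop] fun t : ℝ ↦ t ^ b := by
  refine .of_norm_left ?_
  simpa only [norm_cexp_neg_mul] using isLittleO_exp_neg_mul_rpow_atTop hs b

theorem integrableOn_log_mul_cexp_neg_mul_Ioi_zero (hs : 0 < s.re) :
    IntegrableOn (fun t : ℝ ↦ (Real.log t : ℂ) * Complex.exp (-(t : ℂ) * s)) (Ioi 0) := by
  have hcont : Continuous fun t : ℝ ↦ Complex.exp (-(t : ℂ) * s) := by fun_prop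
  have hzero : (fun t : ℝ ↦ Complex.exp (-(t : ℂ) * s)) =O[𝓝[>] 0] fun t : ℝ ↦ t ^ (-0 : ℝ) := by
    simpa using (hcont.tendsto 0).isBigO_one ℝ |>.mono nhdsWithin_le_nhds
  have := (mellin_hasDerivAt_of_isBigO_rpow (a := 2) (s := 1)
    (hcont.locallyIntegrable.locallyIntegrableOn _)
    (isLittleO_cexp_neg_mul_rpow_atTop hs _).isBigO (by simp) hzero (by simp)).1
  simpa [MellinConvergent] using this

theorem integral_log_mul_cexp_neg_Ioi_zero :
    ∫ t in Ioi (0 : ℝ), (Real.log t : ℂ) * Complex.exp (-t) = -Real.eulerMascheroniConstant := by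
  have hGamma : Complex.Gamma =ᶠ[𝓝 1] Complex.GammaIntegral := by
    filter_upwards [(Complex.continuous_re.tendsto 1).eventually_const_lt one_pos] with z hz
    exact Complex.Gamma_eq_integral hz
  have := (Complex.hasDerivAt_GammaIntegral (s := 1) (by simp)).unique
    (Complex.hasDerivAt_Gamma_one.congr_of_eventuallyEq hGamma.symm)
  simpa using this

theorem hasDerivAt_cexp_neg_mul (s : ℂ) (t : ℝ) :
    HasDerivAt (fun t : ℝ ↦ Complex.exp (-(t : ℂ) * s)) (-s * Complex.exp (-(t : ℂ) * s)) t := by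
  have := ((hasDerivAt_id t).ofReal_comp.neg.mul_const s).cexp
  simpa [mul_comm] using this

theorem hasDerivAt_log_mul_cexp_neg_mul (s : ℂ) {t : ℝ} (ht : t ≠ 0) :
    HasDerivAt (fun t : ℝ ↦ (Real.log t : ℂ) * Complex.exp (-(t : ℂ) * s))
      (Complex.exp (-(t : ℂ) * s) / t - s * (Real.log t * Complex.exp (-(t : ℂ) * s))) t := by
  refine ((Real.hasDerivAt_log ht).ofReal_comp.mul (hasDerivAt_cexp_neg_mul s t)).congr_deriv ?_
  push_cast
  ring

theorem hasDerivAt_log_mul_one_sub_cexp_neg_mul (s : ℂ) {t : ℝ} (ht : t ≠ 0) :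
    HasDerivAt (fun t : ℝ ↦ (Real.log t : ℂ) * (1 - Complex.exp (-(t : ℂ) * s)))
      ((1 - Complex.exp (-(t : ℂ) * s)) / t + s * (Real.log t * Complex.exp (-(t : ℂ) * s))) t := by
  refine ((Real.hasDerivAt_log ht).ofReal_comp.mul
    ((hasDerivAt_cexp_neg_mul s t).const_sub 1)).congr_deriv ?_
  push_cast
  ring

theorem tendsto_log_mul_one_sub_cexp_neg_mul_nhdsGT_zero (s : ℂ) :
    Tendsto (fun t : ℝ ↦ (Real.log t : ℂ) * (1 - Complex.exp (-(t : ℂ) * s))) (𝓝[>] 0) (𝓝 0) := by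
  have hexp : (fun t : ℝ ↦ 1 - Complex.exp (-(t : ℂ) * s)) =O[𝓝[>] 0] fun t : ℝ ↦ t := by
    simpa using ((hasDerivAt_cexp_neg_mul s 0).const_sub 1).isBigO_sub.mono nhdsWithin_le_nhds
  have hlog : (fun t : ℝ ↦ (Real.log t : ℂ)) =O[𝓝[>] 0] Real.log :=
    Complex.isBigO_ofReal_left.2 (isBigO_refl _ _)
  refine (hlog.mul hexp).trans_tendsto ?_
  simpa using tendsto_log_mul_rpow_nhdsGT_zero one_pos

theorem integral_cexp_neg_mul_div_Ioi (hs : 0 < s.re) (ha : 0 < a) :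
    ∫ t in Ioi a, Complex.exp (-(t : ℂ) * s) / t =
      s * (∫ t in Ioi a, (Real.log t : ℂ) * Complex.exp (-(t : ℂ) * s)) -
        Real.log a * Complex.exp (-(a : ℂ) * s) := by
  have hlog := (integrableOn_log_mul_cexp_neg_mul_Ioi_zero hs).mono_set (Ioi_subset_Ioi ha.le)
  have hdiv := integrableOn_cexp_neg_mul_div_Ioi hs ha
  have hderiv {t : ℝ} (ht : a ≤ t) := hasDerivAt_log_mul_cexp_neg_mul s (ha.trans_le ht).ne'
  have hderiv_int := hdiv.sub (hlog.const_mul s)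
  have htop : Tendsto (fun t : ℝ ↦ (Real.log t : ℂ) * Complex.exp (-(t : ℂ) * s)) atTop (𝓝 0) :=
    tendsto_zero_of_hasDerivAt_of_integrableOn_Ioi
      (fun t ht ↦ hderiv (le_of_lt ht)) hderiv_int hlog
  have := integral_Ioi_of_hasDerivAt_of_tendsto' (fun t ht ↦ hderiv ht) hderiv_int htop
  rw [integral_sub hdiv (hlog.const_mul s), integral_const_mul] at this
  linear_combination this

theorem integral_one_sub_cexp_neg_mul_div (s : ℂ) (ha : 0 < a) :
    ∫ t in (0 : ℝ)..a, (1 - Complex.exp (-(t : ℂ) * s)) / t =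
      Real.log a * (1 - Complex.exp (-(a : ℂ) * s)) -
        s * ∫ t in (0 : ℝ)..a, (Real.log t : ℂ) * Complex.exp (-(t : ℂ) * s) := by
  have hlog := intervalIntegrable_log_mul_cexp_neg_mul s 0 a
  have hdiv := intervalIntegrable_one_sub_cexp_neg_mul_div s 0 a
  have hderiv {t : ℝ} (ht : 0 < t) := hasDerivAt_log_mul_one_sub_cexp_neg_mul s ht.ne'
  have := intervalIntegral.integral_eq_sub_of_hasDerivAt_of_tendsto ha
    (fun t ht ↦ hderiv ht.1) (hdiv.add (hlog.const_mul s))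
    (tendsto_log_mul_one_sub_cexp_neg_mul_nhdsGT_zero s)
    ((hderiv ha).continuousAt.tendsto.mono_left nhdsWithin_le_nhds)
  rw [intervalIntegral.integral_add hdiv (hlog.const_mul s),
    intervalIntegral.integral_const_mul] at this
  linear_combination this

theorem integral_one_sub_cexp_neg_mul_div_sub_integral_Ioi (hs : 0 < s.re) (ha : 0 < a) :
    (∫ t in (0 : ℝ)..a, (1 - Complex.exp (-(t : ℂ) * s)) / t) -
        ∫ t in Ioi a, Complex.exp (-(t : ℂ) * s) / t =
      Real.log a - s * ∫ t in Ioi (0 : ℝ), (Real.log t : ℂ) * Complex.exp (-(t : ℂ) * s) := by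
  have hlog := integrableOn_log_mul_cexp_neg_mul_Ioi_zero hs
  rw [integral_one_sub_cexp_neg_mul_div s ha, integral_cexp_neg_mul_div_Ioi hs ha,
    ← intervalIntegral.integral_interval_add_Ioi hlog (hlog.mono_set (Ioi_subset_Ioi ha.le))]
  ring

theorem integral_cexp_sub_cexp_div_Ioi_zero_eq_sub (hw : 0 < w.re) (hs : 0 < s.re) (ha : 0 < a) :
    ∫ t in Ioi (0 : ℝ), (Complex.exp (-(t : ℂ) * w) - Complex.exp (-(t : ℂ) * s)) / t =
      ((∫ t in (0 : ℝ)..a, (1 - Complex.exp (-(t : ℂ) * s)) / t) -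
        ∫ t in Ioi a, Complex.exp (-(t : ℂ) * s) / t) -
      ((∫ t in (0 : ℝ)..a, (1 - Complex.exp (-(t : ℂ) * w)) / t) -
        ∫ t in Ioi a, Complex.exp (-(t : ℂ) * w) / t) := by
  have hint := integrableOn_cexp_sub_cexp_div_Ioi_zero hw hs
  have hhead := intervalIntegral.integral_sub (intervalIntegrable_one_sub_cexp_neg_mul_div s 0 a)
    (intervalIntegrable_one_sub_cexp_neg_mul_div w 0 a)
  have htail := integral_sub (integrableOn_cexp_neg_mul_div_Ioi hw ha)
    (integrableOn_cexp_neg_mul_div_Ioi hs ha)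
  simp only [← sub_div, sub_sub_sub_cancel_left] at hhead htail
  rw [← intervalIntegral.integral_interval_add_Ioi hint (hint.mono_set (Ioi_subset_Ioi ha.le)),
    hhead, htail]
  ring

theorem frullani_log_gamma_general (hs : 0 < s.re) (ha : 0 < a) :
    (∫ t in (0 : ℝ)..a, (1 - Complex.exp (-(t : ℂ) * s)) / t) -
        ∫ t in Ioi a, Complex.exp (-(t : ℂ) * s) / t =
      Complex.log s + Real.log a + Real.eulerMascheroniConstant := by
  have hone : (0 : ℝ) < (1 : ℂ).re := by simp
  have hdiff := integral_cexp_sub_cexp_div_Ioi_zero_eq_sub hone hs ha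
  have hbase := integral_one_sub_cexp_neg_mul_div_sub_integral_Ioi hone ha
  rw [integral_cexp_sub_cexp_div_Ioi_zero hone hs, Complex.log_one] at hdiff
  simp only [mul_one, integral_log_mul_cexp_neg_Ioi_zero] at hdiff hbase
  linear_combination hbase - hdiff

end

/-- for `Re s > 0`,
`∫_0^1 (1 - e^{-ts})/t dt - ∫_1^∞ e^{-ts}/t dt = log s + γ`. -/
theorem frullani_log_gamma (s : ℂ) (hs : 0 < s.re) :
    (∫ t in (0:ℝ)..1, (1 - Complex.exp (-(t : ℂ) * s)) / (t : ℂ)) -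
        ∫ t in Set.Ioi (1 : ℝ), Complex.exp (-(t : ℂ) * s) / (t : ℂ)
      = Complex.log s + (Real.eulerMascheroniConstant : ℂ) := by
  simpa using frullani_log_gamma_general hs one_pos
end

section
/- For every real $u \ge 1$ and every complex $s$ with $\mathrm{Re}(s) > 0$, $\int_{1/u}^{\infty} \frac{e^{-ts}}{t}\,dt = \log u - \log s - \gamma + \int_0^{1/u} \frac{1 - e^{-ts}}{t}\,dt$, where $\log s$ is the principal branch of the logarithm and $\gamma$ is the Euler–Mascheroni constant. -/
open MeasureTheory

/-!
Let `R a s` be the tail integral `∫_a^∞ e^{-ts}/t dt` minus the head integral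
`∫_0^a (1 - e^{-ts})/t dt`. The singular term `1/t` cancels in `R a s - R a 1`, leaving the Frullani
integral `∫_0^∞ (e^{-ts} - e^{-t})/t dt = -log s`, which is evaluated by differentiating in `s`.
At `s = 1`, integrating both pieces by parts against `log t` gives
`R a 1 = ∫_0^∞ e^{-t} log t dt - log a = Γ'(1) - log a = -γ - log a`.
-/

section ExpIntegral

open Complex Set Filter Topology Asymptotics

variable {a : ℝ} {s z w : ℂ}

/-- The regularization of the divergent integral `∫_0^∞ e^{-ts}/t dt` obtained by subtracting the
singular term `1/t` from the integrand on `(0, a)`. -/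
noncomputable def regularizedExpIntegral (a : ℝ) (s : ℂ) : ℂ :=
  (∫ t in Ioi a, exp (-(t : ℂ) * s) / (t : ℂ)) -
    ∫ t in (0 : ℝ)..a, (1 - exp (-(t : ℂ) * s)) / (t : ℂ)

lemma hasDerivAt_exp_neg_ofReal_mul (s : ℂ) (t : ℝ) :
    HasDerivAt (fun t : ℝ ↦ exp (-(t : ℂ) * s)) (-(s * exp (-(t : ℂ) * s))) t := by
  refine (((hasDerivAt_id t).ofReal_comp.neg.mul_const s).cexp).congr_deriv ?_
  simp only [Pi.neg_apply, id_eq, ofReal_one]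
  ring

lemma intervalIntegrable_one_sub_exp_div (s : ℂ) (a b : ℝ) :
    IntervalIntegrable (fun t : ℝ ↦ (1 - exp (-(t : ℂ) * s)) / (t : ℂ)) volume a b := by
  have hslope : Continuous (dslope (fun t : ℝ ↦ -exp (-(t : ℂ) * s)) 0) := by
    rw [← continuousOn_univ, continuousOn_dslope univ_mem]
    exact ⟨by fun_prop, (hasDerivAt_exp_neg_ofReal_mul s 0).neg.differentiableAt⟩
  refine (hslope.intervalIntegrable a b).congr_ae (ae_restrict_of_ae ?_)
  filter_upwards [volume.ae_ne (0 : ℝ)] with t ht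
  rw [dslope_of_ne _ ht, slope_def_module, real_smul]
  push_cast
  simp only [neg_zero, zero_mul, exp_zero, sub_zero]
  ring

lemma integrableOn_Ioi_exp_neg_mul (hs : 0 < s.re) (a : ℝ) :
    IntegrableOn (fun t : ℝ ↦ exp (-(t : ℂ) * s)) (Ioi a) := by
  simpa only [neg_mul, mul_neg, mul_comm] using
    integrableOn_exp_mul_complex_Ioi (a := -s) (by simpa using hs) a

lemma integrableOn_Ioi_exp_div (hs : 0 < s.re) (ha : 0 < a) :
    IntegrableOn (fun t : ℝ ↦ exp (-(t : ℂ) * s) / (t : ℂ)) (Ioi a) := by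
  simp only [div_eq_mul_inv]
  refine (integrableOn_Ioi_exp_neg_mul hs a).mul_bdd (c := a⁻¹)
    (by fun_prop : Measurable fun t : ℝ ↦ (t : ℂ)⁻¹).aestronglyMeasurable ?_
  filter_upwards [ae_restrict_mem measurableSet_Ioi] with t ht
  rw [norm_inv, norm_real, Real.norm_of_nonneg (ha.trans ht).le]
  exact inv_anti₀ ha ht.le

lemma intervalIntegrable_exp_sub_exp_div (z w : ℂ) (a b : ℝ) :
    IntervalIntegrable (fun t : ℝ ↦ (exp (-(t : ℂ) * z) - exp (-(t : ℂ) * w)) / (t : ℂ))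
      volume a b :=
  ((intervalIntegrable_one_sub_exp_div w a b).sub
    (intervalIntegrable_one_sub_exp_div z a b)).congr fun t _ ↦ by
      rw [← sub_div, sub_sub_sub_cancel_left]

lemma integrableOn_Ioi_exp_sub_exp_div (hz : 0 < z.re) (hw : 0 < w.re) :
    IntegrableOn (fun t : ℝ ↦ (exp (-(t : ℂ) * z) - exp (-(t : ℂ) * w)) / (t : ℂ)) (Ioi 0) := by
  rw [← Ioc_union_Ioi_eq_Ioi zero_le_one]
  refine IntegrableOn.union ?_ ?_
  · rw [← intervalIntegrable_iff_integrableOn_Ioc_of_le zero_le_one]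
    exact intervalIntegrable_exp_sub_exp_div z w 0 1
  · simp only [sub_div]
    exact (integrableOn_Ioi_exp_div hz one_pos).sub (integrableOn_Ioi_exp_div hw one_pos)

lemma hasDerivAt_integral_Ioi_exp_sub_exp_div (hz : 0 < z.re) (hw : 0 < w.re) :
    HasDerivAt (fun z : ℂ ↦ ∫ t in Ioi (0 : ℝ),
      (exp (-(t : ℂ) * z) - exp (-(t : ℂ) * w)) / (t : ℂ)) (-z⁻¹) z := by
  have hdom := hasDerivAt_integral_of_dominated_loc_of_deriv_le
    (F := fun (x : ℂ) (t : ℝ) ↦ (exp (-(t : ℂ) * x) - exp (-(t : ℂ) * w)) / (t : ℂ))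
    (F' := fun (x : ℂ) (t : ℝ) ↦ -exp (-x * (t : ℂ)))
    (μ := volume.restrict (Ioi 0)) (s := {x : ℂ | z.re / 2 < x.re})
    (bound := fun t ↦ Real.exp (-(z.re / 2) * t))
    ((isOpen_lt continuous_const continuous_re).mem_nhds (half_lt_self hz))
    (.of_forall fun x ↦ Measurable.aestronglyMeasurable (by fun_prop))
    (integrableOn_Ioi_exp_sub_exp_div hz hw)
    (Continuous.aestronglyMeasurable (by fun_prop)) ?bound
    (exp_neg_integrableOn_Ioi 0 (half_pos hz)) ?deriv
  case bound =>
    filter_upwards [ae_restrict_mem measurableSet_Ioi] with t (ht : 0 < t) x (hx : _ < _)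
    rw [norm_neg, norm_exp, re_mul_ofReal, neg_re]
    gcongr
  case deriv =>
    filter_upwards [ae_restrict_mem measurableSet_Ioi] with t (ht : 0 < t) x _
    have ht' : (t : ℂ) ≠ 0 := ofReal_ne_zero.2 ht.ne'
    refine ((((hasDerivAt_id x).const_mul (-(t : ℂ))).cexp.sub_const _).div_const _).congr_deriv ?_
    simp only [id, mul_comm x, neg_mul]
    field_simp
  refine hdom.2.congr_deriv ?_
  rw [integral_neg, integral_exp_mul_complex_Ioi (by simpa using hz)]
  simp

theorem integral_Ioi_exp_sub_exp_div (hz : 0 < z.re) (hw : 0 < w.re) :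
    ∫ t in Ioi (0 : ℝ), (exp (-(t : ℂ) * z) - exp (-(t : ℂ) * w)) / (t : ℂ) = log w - log z := by
  have hderiv : ∀ x : ℂ, 0 < x.re → HasDerivAt (fun x ↦ log w - log x) (-x⁻¹) x :=
    fun x hx ↦ (hasDerivAt_log (.inl hx)).const_sub _
  have hderiv' := fun (x : ℂ) (hx : 0 < x.re) ↦ hasDerivAt_integral_Ioi_exp_sub_exp_div hx hw
  exact (isOpen_lt continuous_const continuous_re).eqOn_of_deriv_eq
    (convex_halfSpace_re_gt 0).isPreconnected
    (fun x hx ↦ (hderiv' x hx).differentiableAt.differentiableWithinAt)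
    (fun x hx ↦ (hderiv x hx).differentiableAt.differentiableWithinAt)
    (fun x hx ↦ (hderiv' x hx).deriv.trans (hderiv x hx).deriv.symm) hw (by simp) hz

lemma regularizedExpIntegral_sub (hz : 0 < z.re) (hw : 0 < w.re) (ha : 0 < a) :
    regularizedExpIntegral a z - regularizedExpIntegral a w = log w - log z := by
  have htail : ∫ t in Ioi a, (exp (-(t : ℂ) * z) - exp (-(t : ℂ) * w)) / (t : ℂ) =
      (∫ t in Ioi a, exp (-(t : ℂ) * z) / (t : ℂ)) -
        ∫ t in Ioi a, exp (-(t : ℂ) * w) / (t : ℂ) := by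
    simp only [sub_div]
    exact integral_sub (integrableOn_Ioi_exp_div hz ha) (integrableOn_Ioi_exp_div hw ha)
  have hhead : ∫ t in (0 : ℝ)..a, (exp (-(t : ℂ) * z) - exp (-(t : ℂ) * w)) / (t : ℂ) =
      (∫ t in (0 : ℝ)..a, (1 - exp (-(t : ℂ) * w)) / (t : ℂ)) -
        ∫ t in (0 : ℝ)..a, (1 - exp (-(t : ℂ) * z)) / (t : ℂ) := by
    rw [← intervalIntegral.integral_sub (intervalIntegrable_one_sub_exp_div w 0 a)
      (intervalIntegrable_one_sub_exp_div z 0 a)]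
    simp only [← sub_div, sub_sub_sub_cancel_left]
  have hint := integrableOn_Ioi_exp_sub_exp_div hz hw
  rw [← integral_Ioi_exp_sub_exp_div hz hw, ← intervalIntegral.integral_interval_add_Ioi hint
    (hint.mono_set (Ioi_subset_Ioi ha.le)), hhead, htail, regularizedExpIntegral,
    regularizedExpIntegral]
  ring

lemma integrableOn_Ioi_log_mul_exp (hs : 0 < s.re) :
    IntegrableOn (fun t : ℝ ↦ (Real.log t : ℂ) * exp (-(t : ℂ) * s)) (Ioi 0) := by
  have hcont : Continuous fun t : ℝ ↦ exp (-(t : ℂ) * s) := by fun_prop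
  have htop : (fun t : ℝ ↦ exp (-(t : ℂ) * s)) =O[atTop] fun t : ℝ ↦ t ^ (-2 : ℝ) := by
    have hnorm : ∀ t : ℝ, ‖exp (-(t : ℂ) * s)‖ = Real.exp (-s.re * t) := fun t ↦ by
      simp [norm_exp, mul_comm]
    rw [← isBigO_norm_left]
    simpa only [hnorm] using (isLittleO_exp_neg_mul_rpow_atTop hs (-2)).isBigO
  have hzero : (fun t : ℝ ↦ exp (-(t : ℂ) * s)) =O[𝓝[>] 0] fun t : ℝ ↦ t ^ (-0 : ℝ) := by
    simpa using ((hcont.tendsto 0).mono_left nhdsWithin_le_nhds).isBigO_one ℝ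
  simpa [MellinConvergent] using (mellin_hasDerivAt_of_isBigO_rpow (s := 1)
    (hcont.locallyIntegrable.locallyIntegrableOn _) htop (by simp) hzero (by simp)).1

lemma integral_Ioi_log_mul_exp_neg :
    ∫ t in Ioi (0 : ℝ), (Real.log t : ℂ) * exp (-(t : ℂ)) =
      -(Real.eulerMascheroniConstant : ℂ) := by
  have hGamma : Gamma =ᶠ[𝓝 1] GammaIntegral := by
    filter_upwards [(isOpen_lt continuous_const continuous_re).mem_nhds
      (by simp : (0 : ℝ) < (1 : ℂ).re)] with z hz using Gamma_eq_integral hz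
  simpa using (hasDerivAt_GammaIntegral (s := 1) (by simp)).unique
    (hasDerivAt_Gamma_one.congr_of_eventuallyEq hGamma.symm)

lemma hasDerivAt_log_mul_exp (s : ℂ) {t : ℝ} (ht : t ≠ 0) :
    HasDerivAt (fun t : ℝ ↦ (Real.log t : ℂ) * exp (-(t : ℂ) * s))
      (exp (-(t : ℂ) * s) / t - s * (Real.log t * exp (-(t : ℂ) * s))) t := by
  refine ((Real.hasDerivAt_log ht).ofReal_comp.mul
    (hasDerivAt_exp_neg_ofReal_mul s t)).congr_deriv ?_
  push_cast
  ring

lemma integral_Ioi_exp_div (hs : 0 < s.re) (ha : 0 < a) :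
    ∫ t in Ioi a, exp (-(t : ℂ) * s) / (t : ℂ) =
      s * (∫ t in Ioi a, (Real.log t : ℂ) * exp (-(t : ℂ) * s)) -
        Real.log a * exp (-(a : ℂ) * s) := by
  have hlog := (integrableOn_Ioi_log_mul_exp hs).mono_set (Ioi_subset_Ioi ha.le)
  have hexp := integrableOn_Ioi_exp_div hs ha
  have hderiv : ∀ t ∈ Ici a, HasDerivAt (fun t : ℝ ↦ (Real.log t : ℂ) * exp (-(t : ℂ) * s)) _ t :=
    fun t ht ↦ hasDerivAt_log_mul_exp s (ha.trans_le ht).ne'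
  have hderiv_int := hexp.sub (hlog.const_mul s)
  have hlim := tendsto_zero_of_hasDerivAt_of_integrableOn_Ioi
    (fun t ht ↦ hderiv t (Ioi_subset_Ici_self ht)) hderiv_int hlog
  have hparts := integral_Ioi_of_hasDerivAt_of_tendsto' hderiv hderiv_int hlim
  rw [integral_sub hexp (hlog.const_mul s), integral_const_mul] at hparts
  linear_combination hparts

lemma tendsto_log_mul_one_sub_exp_nhdsGT_zero (s : ℂ) :
    Tendsto (fun t : ℝ ↦ (Real.log t : ℂ) * (1 - exp (-(t : ℂ) * s))) (𝓝[>] 0) (𝓝 0) := by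
  have hexp : (fun t : ℝ ↦ 1 - exp (-(t : ℂ) * s)) =O[𝓝[>] 0] fun t : ℝ ↦ t := by
    simpa using ((hasDerivAt_exp_neg_ofReal_mul s 0).isBigO_sub.mono nhdsWithin_le_nhds).neg_left
  have hlog : (fun t : ℝ ↦ (Real.log t : ℂ)) =O[𝓝[>] 0] Real.log :=
    isBigO_ofReal_left.2 (isBigO_refl _ _)
  refine (hlog.mul hexp).trans_tendsto ?_
  simpa using tendsto_log_mul_rpow_nhdsGT_zero one_pos

lemma integral_one_sub_exp_div (s : ℂ) (ha : 0 < a) :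
    ∫ t in (0 : ℝ)..a, (1 - exp (-(t : ℂ) * s)) / (t : ℂ) =
      Real.log a * (1 - exp (-(a : ℂ) * s)) -
        s * ∫ t in (0 : ℝ)..a, (Real.log t : ℂ) * exp (-(t : ℂ) * s) := by
  have hlog : IntervalIntegrable (fun t : ℝ ↦ (Real.log t : ℂ) * exp (-(t : ℂ) * s))
      volume 0 a := by
    have hreal : IntervalIntegrable Real.log volume 0 a := intervalIntegral.intervalIntegrable_log'
    exact IntervalIntegrable.mul_continuousOn ⟨hreal.1.ofReal, hreal.2.ofReal⟩ (by fun_prop)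
  have hexp := intervalIntegrable_one_sub_exp_div s 0 a
  have hderiv : ∀ t : ℝ, 0 < t → HasDerivAt
      (fun t : ℝ ↦ (Real.log t : ℂ) * (1 - exp (-(t : ℂ) * s)))
      ((1 - exp (-(t : ℂ) * s)) / t + s * (Real.log t * exp (-(t : ℂ) * s))) t := by
    intro t ht
    simp only [mul_sub, mul_one]
    refine ((Real.hasDerivAt_log ht.ne').ofReal_comp.sub
      (hasDerivAt_log_mul_exp s ht.ne')).congr_deriv ?_
    push_cast
    ring
  have hparts := intervalIntegral.integral_eq_sub_of_hasDerivAt_of_tendsto ha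
    (fun t ht ↦ hderiv t ht.1) (hexp.add (hlog.const_mul s))
    (tendsto_log_mul_one_sub_exp_nhdsGT_zero s)
    ((hderiv a ha).continuousAt.tendsto.mono_left nhdsWithin_le_nhds)
  rw [intervalIntegral.integral_add hexp (hlog.const_mul s),
    intervalIntegral.integral_const_mul] at hparts
  linear_combination hparts

lemma regularizedExpIntegral_eq_integral_log_mul_exp (hs : 0 < s.re) (ha : 0 < a) :
    regularizedExpIntegral a s =
      s * (∫ t in Ioi (0 : ℝ), (Real.log t : ℂ) * exp (-(t : ℂ) * s)) - Real.log a := by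
  have hint := integrableOn_Ioi_log_mul_exp hs
  rw [regularizedExpIntegral, integral_Ioi_exp_div hs ha, integral_one_sub_exp_div s ha,
    ← intervalIntegral.integral_interval_add_Ioi hint (hint.mono_set (Ioi_subset_Ioi ha.le))]
  ring

lemma regularizedExpIntegral_one (ha : 0 < a) :
    regularizedExpIntegral a 1 = -(Real.eulerMascheroniConstant : ℂ) - Real.log a := by
  simp only [regularizedExpIntegral_eq_integral_log_mul_exp (s := 1) (by simp) ha, mul_one,
    integral_Ioi_log_mul_exp_neg, one_mul]

theorem regularizedExpIntegral_eq (hs : 0 < s.re) (ha : 0 < a) :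
    regularizedExpIntegral a s =
      -(Real.log a : ℂ) - log s - (Real.eulerMascheroniConstant : ℂ) := by
  have hsub := regularizedExpIntegral_sub hs (w := 1) (by simp) ha
  rw [regularizedExpIntegral_one ha, log_one] at hsub
  linear_combination hsub

end ExpIntegral

theorem exp_integral_eq_log_general (u : ℝ) (hu : 0 < u) (s : ℂ) (hs : 0 < s.re) :
    (∫ t in Set.Ioi (1 / u), Complex.exp (-(t : ℂ) * s) / (t : ℂ))
      = (Real.log u : ℂ) - Complex.log s - (Real.eulerMascheroniConstant : ℂ) +
          ∫ t in (0:ℝ)..(1 / u), (1 - Complex.exp (-(t : ℂ) * s)) / (t : ℂ) := by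
  have hreg := regularizedExpIntegral_eq hs (one_div_pos.2 hu)
  rw [one_div, Real.log_inv, Complex.ofReal_neg, neg_neg, ← one_div] at hreg
  exact sub_eq_iff_eq_add.1 hreg

/-- for real `u ≥ 1` and complex `s` with `Re s > 0`,
`∫_{1/u}^∞ e^{-ts}/t dt = log u - log s - γ + ∫_0^{1/u} (1 - e^{-ts})/t dt`. -/
theorem exp_integral_eq_log (u : ℝ) (hu : 1 ≤ u) (s : ℂ) (hs : 0 < s.re) :
    (∫ t in Set.Ioi (1 / u), Complex.exp (-(t : ℂ) * s) / (t : ℂ))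
      = (Real.log u : ℂ) - Complex.log s - (Real.eulerMascheroniConstant : ℂ) +
          ∫ t in (0:ℝ)..(1 / u), (1 - Complex.exp (-(t : ℂ) * s)) / (t : ℂ) :=
  exp_integral_eq_log_general u (one_pos.trans_le hu) s hs
end
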